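/- arXiv:1807.07802 — 2 statements merged into one kernel-verified Lean document; each statement's English description precedes it below -/
import Mathlib

section
/- Let Γ = (V,E) be a finite simplicial graph with an edge labeling ψ : E → {2,3,4,...}, and let Γ₁, Γ₂ be induced subgraphs of Γ with Γ = Γ₁ ∪ Γ₂. Then the Coxeter group decomposes as the amalgamated free product C(Γ) = C(Γ₁) ∗_{C(Γ₁∩Γ₂)} C(Γ₂); consequently, if C(Γ₁) and C(Γ₂) are coherent and C(Γ₁∩Γ₂) is slender, then C(Γ) is coherent. -/
def Group.Slender (G : Type*) [Group G] : Prop := ∀ H : Subgroup G, H.FG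

def Group.FinitelyPresented (G : Type*) [Group G] : Prop :=
  ∃ (n : ℕ) (rels : Set (FreeGroup (Fin n))), rels.Finite ∧ Nonempty (PresentedGroup rels ≃* G)

def Group.Coherent (G : Type*) [Group G] : Prop :=
  ∀ H : Subgroup G, H.FG → Group.FinitelyPresented H

def SimpleGraph.NoInducedCycleGT3 {V : Type*} (Γ : SimpleGraph V) : Prop :=
  ∀ n : ℕ, 4 ≤ n → IsEmpty (SimpleGraph.cycleGraph n ↪g Γ)

/-- The restriction of a Coxeter matrix to a set of indices
(corresponding to an induced subgraph of the Coxeter graph). -/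
def CoxeterMatrix.restrict {V : Type*} (M : CoxeterMatrix V) (S : Set V) : CoxeterMatrix S where
  M a b := M a b
  isSymm := Matrix.IsSymm.ext fun a b => M.isSymm.apply a b
  diagonal a := M.diagonal a
  off_diagonal a b h := M.off_diagonal a b (fun hc => h (Subtype.ext hc))

/-- `M` is the Coxeter matrix associated to the simplicial graph `Γ` with edge labeling
`ψ : E → {2,3,4,...}` (recorded by the values of `M` on adjacent pairs): non-adjacent
distinct vertices get the label `0` (that is, `∞`: no relation). -/
def CoxeterMatrix.IsMatrixOf {V : Type*} (M : CoxeterMatrix V) (Γ : SimpleGraph V) : Prop :=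
  (∀ v w, Γ.Adj v w → 2 ≤ M v w) ∧ (∀ v w, v ≠ w → ¬Γ.Adj v w → M v w = 0)

/-- The canonical homomorphism between the Coxeter groups of two nested induced subgraphs of
the Coxeter graph, sending simple reflections to simple reflections. -/
def CoxeterMatrix.restrictHom {V : Type*} (M : CoxeterMatrix V) {S T : Set V} (hST : S ⊆ T) :
    (M.restrict S).Group →* (M.restrict T).Group :=
  (M.restrict S).toCoxeterSystem.lift
    ⟨fun i => (M.restrict T).simple ⟨↑i, hST i.2⟩,
     fun i i' => (M.restrict T).toCoxeterSystem.simple_mul_simple_pow ⟨↑i, hST i.2⟩ ⟨↑i', hST i'.2⟩⟩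

/-- The canonical homomorphism from the Coxeter group of an induced subgraph of the Coxeter
graph into the full Coxeter group, sending simple reflections to simple reflections. -/
def CoxeterMatrix.restrictIncl {V : Type*} (M : CoxeterMatrix V) (S : Set V) :
    (M.restrict S).Group →* M.Group :=
  (M.restrict S).toCoxeterSystem.lift
    ⟨fun i => M.simple ↑i,
     fun i i' => M.toCoxeterSystem.simple_mul_simple_pow ↑i ↑i'⟩

namespace CoxeterAmalgam

/-!
Tits' geometric representation of a Coxeter group is faithful, because `w α_s` has nonnegative
coordinates whenever `s` is not a right descent of `w`. The representation of a standard parabolic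
subgroup sits inside that of the whole group, so parabolic subgroups embed. As every relation of
`C(Γ)` is a relation of `C(Γ₁)` or of `C(Γ₂)`, comparing presentations gives the universal property
of the amalgamated product.

An amalgamated product `A₁ ∗_C A₂` acts on its Bass–Serre tree, with vertex stabilizers conjugate to
`A₁` or `A₂` and edge stabilizers conjugate to `C`. Coherence therefore follows once a group `G` is
coherent whenever it acts on a tree `T` with coherent vertex stabilizers and slender edge
stabilizers. Let `F` be a free group of finite rank mapping onto a finitely generated subgroup of
`G`, with kernel `M`, and let `Y` be a finite subtree of `T` containing a vertex `x₀` and its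
translates by the generators of `F`. Modulo `M` the stabilizers in `F` of the edges of `Y` are
finitely generated. Hence there are finitely generated subgroups of the vertex stabilizers in `F`
which record all incidences between translates of edges of `Y`; by coherence, they meet `M` inside
a subgroup `N ≤ M` that is the normal closure in `F` of a finite set. Enlarging them by `N`, the
corresponding coset spaces form a graph that maps to `T` locally injectively, hence injectively on
connected components. Now `M` fixes `x₀`, so it fixes the lift of `x₀`, whose stabilizer meets `M`
inside `N`. Thus `M = N`.
-/

/-! ### The geometric representation -/

section Reflections

open Module Polynomial.Chebyshev

variable {R E : Type*} [CommRing R] [AddCommGroup E] [Module R E] {x y : E} {f g : Dual R E}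

theorem reflection_mul_reflection_pow_apply_self_eq_chebyshev (hf : f x = 2) (hg : g y = 2) {c : R}
    (hfy : f y = -2 * c) (hgx : g x = -2 * c) (k : ℕ) :
    ((reflection hf * reflection hg) ^ k) x =
      (U R (2 * k)).eval c • x + (U R (2 * k - 1)).eval c • y := by
  induction k with
  | zero => simp
  | succ k ih =>
    have hodd : (U R (2 * k + 1)).eval c =
        2 * c * (U R (2 * k)).eval c - (U R (2 * k - 1)).eval c := by
      simp [U_add_one]
    have heven : (U R (2 * k + 2)).eval c =
        2 * c * (U R (2 * k + 1)).eval c - (U R (2 * k)).eval c := by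
      simp [U_add_two]
    rw [pow_succ', LinearEquiv.mul_apply, ih, Nat.cast_succ, mul_add_one,
      show (2 * k + 2 - 1 : ℤ) = 2 * k + 1 by ring, heven, hodd]
    simp only [LinearEquiv.mul_apply, reflection_apply, map_add, map_sub, map_smul, hf,
      hg, hfy, hgx]
    module

theorem semiconj_apply_sub_self {w : E ≃ₗ[R] E} (hf : f x = 2) (hx : w x = x)
    (hw : SemiconjBy (reflection hf) w⁻¹ w) (z : E) :
    w (w z - z) = f (w z - z) • x - (w z - z) := by
  have hconj : w (reflection hf (w z)) = reflection hf z := by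
    simpa using (LinearEquiv.congr_fun hw.eq (w z)).symm
  simp only [reflection_apply, map_sub, map_smul, hx] at hconj ⊢
  linear_combination (norm := module) hconj

/-- A power `w` of the product of two reflections is inverted under conjugation by either of them.
If it fixes both roots, then it both fixes and negates every vector of the form `w z - z`. -/
theorem reflection_mul_reflection_pow_eq_one [IsAddTorsionFree E] (hf : f x = 2) (hg : g y = 2)
    (hxy : LinearIndependent R ![x, y]) {k : ℕ}
    (hx : ((reflection hf * reflection hg) ^ k) x = x)
    (hy : ((reflection hf * reflection hg) ^ k) y = y) :
    (reflection hf * reflection hg) ^ k = 1 := by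
  set u := reflection hf * reflection hg with hu
  have hconj_f : SemiconjBy (reflection hf) (u ^ k)⁻¹ (u ^ k) := by
    rw [← inv_pow]
    exact SemiconjBy.pow_right (by simp [SemiconjBy, hu, mul_inv_rev, reflection_inv, mul_assoc]) k
  have hconj_g : SemiconjBy (reflection hg) (u ^ k)⁻¹ (u ^ k) := by
    rw [← inv_pow]
    have hgg : reflection hg * reflection hg = 1 := mul_eq_one_iff_eq_inv.2 (reflection_inv hg).symm
    refine SemiconjBy.pow_right ?_ k
    rw [SemiconjBy, hu, mul_inv_rev, reflection_inv, reflection_inv, ← mul_assoc, hgg, one_mul,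
      mul_assoc, hgg, mul_one]
  ext z
  have hwf := semiconj_apply_sub_self hf hx hconj_f z
  have hwg := semiconj_apply_sub_self hg hy hconj_g z
  obtain ⟨hfz, hgz⟩ : f ((u ^ k) z - z) = 0 ∧ g ((u ^ k) z - z) = 0 := by
    have := LinearIndependent.pair_iff.1 hxy (f ((u ^ k) z - z)) (-g ((u ^ k) z - z))
      (by linear_combination (norm := module) hwg - hwf)
    rwa [neg_eq_zero] at this
  have hfix : u ((u ^ k) z - z) = (u ^ k) z - z := by
    rw [hu, LinearEquiv.mul_apply, reflection_apply _ hg, hgz, zero_smul, sub_zero,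
      reflection_apply, hfz, zero_smul, sub_zero]
  have hfix_pow : (u ^ k) ((u ^ k) z - z) = (u ^ k) z - z := by
    simpa only [LinearEquiv.coe_pow] using Function.iterate_fixed hfix k
  rw [hfix_pow, hfz, zero_smul, zero_sub, self_eq_neg, sub_eq_zero] at hwf
  simpa using hwf

end Reflections

section Descents

open CoxeterSystem

variable {B W : Type*} [Group W] {M : CoxeterMatrix B} (cs : CoxeterSystem M W)

theorem exists_reduced_mul_wordProd_alternatingWord (s : B) {w : W} {t : B}
    (ht : cs.IsRightDescent w t) :
    ∃ (v : W) (k : ℕ), w = v * cs.wordProd (alternatingWord s t k) ∧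
      cs.length w = cs.length v + k ∧ cs.length v < cs.length w ∧
      ¬ cs.IsRightDescent v s ∧ ¬ cs.IsRightDescent v t := by
  obtain ⟨v, ⟨k, hwv, hlen⟩, hmin⟩ := (measure cs.length).wf.has_min
    {v | ∃ k, w = v * cs.wordProd (alternatingWord s t k) ∧ cs.length w = cs.length v + k}
    ⟨w, 0, by simp [alternatingWord]⟩
  have hnext : ¬ cs.IsRightDescent v (if Even k then t else s) := fun hd ↦ by
    refine hmin (v * cs.simple (if Even k then t else s)) ⟨k + 1, ?_, ?_⟩ hd
    · rw [alternatingWord_succ', wordProd_cons, ← mul_assoc, simple_mul_simple_cancel_right, hwv]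
    · have := cs.isRightDescent_iff.1 hd
      omega
  obtain _ | j := k
  · obtain rfl : w = v := by simpa [alternatingWord] using hwv
    exact absurd ht (by simpa using hnext)
  · have hprev : ¬ cs.IsRightDescent v (if Even j then t else s) := fun hd ↦ by
      rw [alternatingWord_succ', wordProd_cons, ← mul_assoc] at hwv
      have hle := cs.length_mul_le (v * cs.simple (if Even j then t else s))
        (cs.wordProd (alternatingWord s t j))
      have hj := cs.length_wordProd_le (alternatingWord s t j)
      rw [length_alternatingWord] at hj
      rw [← hwv] at hle
      have := cs.isRightDescent_iff.1 hd
      omega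
    refine ⟨v, j + 1, hwv, hlen, by omega, ?_⟩
    by_cases hj : Even j <;> simp_all [Nat.even_add_one]

theorem isReduced_of_length_mul_wordProd {v : W} {l : List B}
    (h : cs.length (v * cs.wordProd l) = cs.length v + l.length) : cs.IsReduced l :=
  le_antisymm (cs.length_wordProd_le l)
    (by have := cs.length_mul_le v (cs.wordProd l); omega)

theorem lt_of_length_mul_wordProd_alternatingWord {v w : W} {s t : B} {k : ℕ} (hst : M s t ≠ 0)
    (hs : ¬ cs.IsRightDescent w s) (hw : w = v * cs.wordProd (alternatingWord s t k))
    (hlen : cs.length w = cs.length v + k) : k < M s t := by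
  have hred : cs.IsReduced (alternatingWord s t k) :=
    isReduced_of_length_mul_wordProd cs (v := v) (by rw [← hw, hlen, length_alternatingWord])
  refine lt_of_le_of_ne
    (not_lt.1 fun hk ↦ cs.not_isReduced_alternatingWord s t hst hk hred) fun hk ↦ hs ?_
  have hbraid := cs.wordProd_braidWord_eq s t
  obtain ⟨j, hj⟩ := Nat.exists_eq_succ_of_ne_zero hst
  rw [braidWord, braidWord, M.symmetric t s, ← hk] at hbraid
  rw [hbraid, hk, hj, alternatingWord_succ, wordProd_concat, ← mul_assoc] at hw
  have hle := cs.length_mul_le v (cs.wordProd (alternatingWord s t j))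
  have hle' := cs.length_wordProd_le (alternatingWord s t j)
  rw [length_alternatingWord] at hle'
  rw [IsRightDescent, hlen, hw, simple_mul_simple_cancel_right]
  omega

end Descents

section Chebyshev

open Polynomial.Chebyshev Real

theorem sin_pi_div_pos {m : ℕ} (hm : 2 ≤ m) : 0 < sin (π / m) :=
  sin_pos_of_pos_of_lt_pi (by positivity) (div_lt_self pi_pos (by exact_mod_cast hm))

theorem chebyshev_U_eval_cos_pi_div_nonneg {m : ℕ} (hm : m ≠ 1) {n : ℤ} (hn : -1 ≤ n)
    (hnm : m ≠ 0 → n + 1 ≤ m) : 0 ≤ (U ℝ n).eval (cos (π / m)) := by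
  have hn' : (0 : ℝ) ≤ n + 1 := by exact_mod_cast neg_le_iff_add_nonneg.1 hn
  rcases eq_or_ne m 0 with rfl | hm0
  · simpa using hn'
  · have hm2 : (0 : ℝ) < m := by positivity
    have hnm' : (n + 1 : ℝ) ≤ m := by exact_mod_cast hnm hm0
    refine nonneg_of_mul_nonneg_left ?_ (sin_pi_div_pos (by omega : 2 ≤ m))
    rw [U_real_cos]
    refine sin_nonneg_of_nonneg_of_le_pi (by positivity) ?_
    calc (n + 1) * (π / m) ≤ m * (π / m) := by gcongr
      _ = π := mul_div_cancel₀ _ hm2.ne'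

theorem chebyshev_U_two_mul_eval_cos_pi_div {m : ℕ} (hm : 2 ≤ m) :
    (U ℝ (2 * m)).eval (cos (π / m)) = 1 ∧ (U ℝ (2 * m - 1)).eval (cos (π / m)) = 0 := by
  have hsin := (sin_pi_div_pos hm).ne'
  have hm0 : (m : ℝ) ≠ 0 := by positivity
  refine ⟨mul_right_cancel₀ hsin ?_, mul_right_cancel₀ hsin ?_⟩
  · rw [U_real_cos, one_mul, ← sin_add_two_pi (π / m)]
    congr 1
    push_cast
    field_simp
    ring
  · rw [U_real_cos, zero_mul, ← sin_two_pi]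
    congr 1
    push_cast
    field_simp
    ring

end Chebyshev

section GeometricRepresentation

open Module Polynomial.Chebyshev Real CoxeterSystem

variable {B : Type*} (M : CoxeterMatrix B)

/-- The linear form `z ↦ 2 ⟨α_s, z⟩` on the space with basis the simple roots `α_t`, where
`⟨α_s, α_t⟩ = -cos (π / M s t)`. An infinite label is encoded as `M s t = 0`; as `π / 0 = 0`, it
gives `⟨α_s, α_t⟩ = -1`. -/
noncomputable def simpleCoroot (s : B) : Dual ℝ (B →₀ ℝ) :=
  Finsupp.linearCombination ℝ fun t ↦ -2 * cos (π / M s t)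

theorem simpleCoroot_single (s t : B) :
    simpleCoroot M s (Finsupp.single t 1) = -2 * cos (π / M s t) := by
  simp [simpleCoroot]

theorem simpleCoroot_single_self (s : B) : simpleCoroot M s (Finsupp.single s 1) = 2 := by
  simp [simpleCoroot_single]

/-- The action of a simple reflection in the geometric representation. -/
noncomputable def simpleReflection (s : B) : (B →₀ ℝ) ≃ₗ[ℝ] (B →₀ ℝ) :=
  reflection (simpleCoroot_single_self M s)

theorem simpleReflection_mul_pow_apply_single (s t : B) (k : ℕ) :
    ((simpleReflection M s * simpleReflection M t) ^ k) (Finsupp.single s 1) =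
      (U ℝ (2 * k)).eval (cos (π / M s t)) • Finsupp.single s 1 +
        (U ℝ (2 * k - 1)).eval (cos (π / M s t)) • Finsupp.single t 1 :=
  reflection_mul_reflection_pow_apply_self_eq_chebyshev _ _ (simpleCoroot_single M s t)
    (by rw [simpleCoroot_single, M.symmetric t s]) k

theorem simpleReflection_mul_pow_apply_single_eq_self {s t : B} (hst : 2 ≤ M s t) :
    ((simpleReflection M s * simpleReflection M t) ^ M s t) (Finsupp.single s 1) =
      Finsupp.single s 1 := by
  obtain ⟨heven, hodd⟩ := chebyshev_U_two_mul_eval_cos_pi_div hst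
  rw [simpleReflection_mul_pow_apply_single, heven, hodd, one_smul, zero_smul, add_zero]

theorem isLiftable_simpleReflection : M.IsLiftable (simpleReflection M) := by
  intro s t
  rcases eq_or_ne s t with rfl | hne
  · rw [M.diagonal, pow_one]
    exact mul_eq_one_iff_eq_inv.2 (reflection_inv _).symm
  rcases Nat.eq_zero_or_pos (M s t) with h0 | hpos
  · rw [h0, pow_zero]
  have hst : 2 ≤ M s t := by have := M.off_diagonal s t hne; omega
  refine reflection_mul_reflection_pow_eq_one _ _ ?_
    (simpleReflection_mul_pow_apply_single_eq_self M hst) ?_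
  · exact LinearIndependent.pair_iff.2 fun a b hab ↦
      ⟨by simpa [hne] using DFunLike.congr_fun hab s, by simpa [hne] using DFunLike.congr_fun hab t⟩
  · have hts := simpleReflection_mul_pow_apply_single_eq_self M (s := t) (t := s)
      (by rwa [M.symmetric t s])
    have hinv : (simpleReflection M t * simpleReflection M s)⁻¹ =
        simpleReflection M s * simpleReflection M t := by
      simp only [mul_inv_rev, simpleReflection, reflection_inv]
    change ((simpleReflection M s * simpleReflection M t) ^ M s t) _ = _
    rw [← hinv, inv_pow, M.symmetric s t]
    exact (LinearEquiv.symm_apply_eq _).2 hts.symm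

/-- The geometric (Tits) representation of the Coxeter group of `M`. -/
noncomputable def geometricRep : M.Group →* (B →₀ ℝ) ≃ₗ[ℝ] (B →₀ ℝ) :=
  M.toCoxeterSystem.lift ⟨simpleReflection M, isLiftable_simpleReflection M⟩

theorem geometricRep_simple (s : B) :
    geometricRep M (M.toCoxeterSystem.simple s) = simpleReflection M s :=
  M.toCoxeterSystem.lift_apply_simple (isLiftable_simpleReflection M) s

theorem geometricRep_wordProd_alternatingWord_apply_single {s t : B} (hst : s ≠ t) {k : ℕ}
    (hk : M s t ≠ 0 → k < M s t) :
    ∃ a b : ℝ, 0 ≤ a ∧ 0 ≤ b ∧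
      geometricRep M (M.toCoxeterSystem.wordProd (alternatingWord s t k)) (Finsupp.single s 1) =
        a • Finsupp.single s 1 + b • Finsupp.single t 1 := by
  set c := cos (π / M s t)
  have hU (n : ℤ) (hn : -1 ≤ n) (hnk : n ≤ k) : 0 ≤ (U ℝ n).eval c :=
    chebyshev_U_eval_cos_pi_div_nonneg (M.off_diagonal s t hst) hn
      fun h ↦ by have := hk h; omega
  obtain ⟨j, rfl | rfl⟩ := k.even_or_odd'
  · refine ⟨_, _, hU (2 * j) (by omega) (by simp), hU (2 * j - 1) (by omega) (by simp), ?_⟩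
    rw [prod_alternatingWord_eq_mul_pow, if_pos (even_two_mul j), one_mul,
      Nat.mul_div_cancel_left j two_pos, map_pow, map_mul]
    exact simpleReflection_mul_pow_apply_single M s t j
  · refine ⟨_, _, hU (2 * j) (by omega) (by simp), hU (2 * j + 1) (by omega) (by simp), ?_⟩
    rw [prod_alternatingWord_eq_mul_pow, if_neg (Nat.not_even_two_mul_add_one j),
      show (2 * j + 1) / 2 = j by omega, map_mul, map_pow, map_mul]
    simp only [geometricRep_simple, LinearEquiv.mul_apply, simpleReflection_mul_pow_apply_single]
    have hodd : (U ℝ (2 * j + 1)).eval c =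
        2 * c * (U ℝ (2 * j)).eval c - (U ℝ (2 * j - 1)).eval c := by
      simp [U_add_one]
    rw [hodd, simpleReflection, map_add, map_smul, map_smul, reflection_apply,
      reflection_apply_self, simpleCoroot_single, M.symmetric t s]
    module

theorem geometricRep_apply_single_nonneg {w : M.Group} {s : B}
    (hs : ¬ M.toCoxeterSystem.IsRightDescent w s) :
    0 ≤ geometricRep M w (Finsupp.single s 1) := by
  induction hn : M.toCoxeterSystem.length w using Nat.strong_induction_on generalizing w s with
  | _ n ih =>
    rcases eq_or_ne w 1 with rfl | hw
    · simp
    obtain ⟨t, ht⟩ := M.toCoxeterSystem.exists_rightDescent_of_ne_one hw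
    have hst : s ≠ t := by rintro rfl; exact hs ht
    obtain ⟨v, k, hwv, hlen, hlt, hvs, hvt⟩ :=
      exists_reduced_mul_wordProd_alternatingWord _ s ht
    obtain ⟨a, b, ha, hb, hab⟩ := geometricRep_wordProd_alternatingWord_apply_single M hst
      fun h0 ↦ lt_of_length_mul_wordProd_alternatingWord _ h0 hs hwv hlen
    rw [hwv, map_mul, LinearEquiv.mul_apply, hab, map_add, map_smul, map_smul]
    exact add_nonneg (smul_nonneg ha (ih _ (hn ▸ hlt) hvs rfl))
      (smul_nonneg hb (ih _ (hn ▸ hlt) hvt rfl))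

theorem geometricRep_injective : Function.Injective (geometricRep M) := by
  rw [injective_iff_map_eq_one]
  by_contra! ⟨w, hw, hne⟩
  obtain ⟨s, hs⟩ := M.toCoxeterSystem.exists_rightDescent_of_ne_one hne
  have hnonneg := geometricRep_apply_single_nonneg M
    (M.toCoxeterSystem.isRightDescent_iff_not_isRightDescent_mul.1 hs)
  rw [map_mul, hw, one_mul, geometricRep_simple, simpleReflection, reflection_apply_self]
    at hnonneg
  have := hnonneg s
  norm_num at this

end GeometricRepresentation

section Parabolic

theorem injective_of_map_simple {B B' : Type*} {M : CoxeterMatrix B} {M' : CoxeterMatrix B'}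
    {i : B → B'} (hM : ∀ s t, M' (i s) (i t) = M s t)
    {φ : M.Group →* M'.Group}
    (hφ : ∀ s, φ (M.toCoxeterSystem.simple s) = M'.toCoxeterSystem.simple (i s)) :
    Function.Injective φ := by
  have hi : Function.Injective i := fun s t hst ↦ by_contra fun hne ↦
    M.off_diagonal s t hne (by rw [← hM, hst, M'.diagonal])
  have hsimple (s : B) (z : B →₀ ℝ) : Finsupp.lmapDomain ℝ ℝ i (simpleReflection M s z) =
      simpleReflection M' (i s) (Finsupp.lmapDomain ℝ ℝ i z) := by
    have hcoroot : simpleCoroot M' (i s) ∘ₗ Finsupp.lmapDomain ℝ ℝ i = simpleCoroot M s := by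
      ext t
      simp [simpleCoroot, hM]
    simp only [simpleReflection, Module.reflection_apply, ← hcoroot, map_sub, map_smul,
      LinearMap.comp_apply, Finsupp.lmapDomain_apply, Finsupp.mapDomain_single]
  have hequiv (w : M.Group) : ∀ z, Finsupp.lmapDomain ℝ ℝ i (geometricRep M w z) =
      geometricRep M' (φ w) (Finsupp.lmapDomain ℝ ℝ i z) := by
    induction w using M.toCoxeterSystem.simple_induction with
    | simple s => simpa only [hφ, geometricRep_simple] using hsimple s
    | one => simp
    | mul w w' hw hw' => simp only [map_mul, LinearEquiv.mul_apply, hw, hw', implies_true]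
  refine (injective_iff_map_eq_one φ).2 fun w hw ↦ geometricRep_injective M ?_
  rw [map_one]
  ext1 z
  apply Finsupp.mapDomain_injective hi
  simpa [hw] using hequiv w z

variable {V : Type*} (M : CoxeterMatrix V)

theorem restrictHom_simple {S T : Set V} (hST : S ⊆ T) (a : S) :
    M.restrictHom hST ((M.restrict S).simple a) = (M.restrict T).simple ⟨a, hST a.2⟩ :=
  (M.restrict S).toCoxeterSystem.lift_apply_simple
    (f := fun a ↦ (M.restrict T).simple ⟨a, hST a.2⟩)
    (fun a b ↦ (M.restrict T).toCoxeterSystem.simple_mul_simple_pow ⟨a, hST a.2⟩ ⟨b, hST b.2⟩) a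

theorem restrictIncl_simple (S : Set V) (a : S) :
    M.restrictIncl S ((M.restrict S).simple a) = M.simple a :=
  (M.restrict S).toCoxeterSystem.lift_apply_simple (f := fun a ↦ M.simple a)
    (fun a b ↦ M.toCoxeterSystem.simple_mul_simple_pow a b) a

theorem restrictHom_injective {S T : Set V} (hST : S ⊆ T) :
    Function.Injective (M.restrictHom hST) :=
  injective_of_map_simple (i := Set.inclusion hST) (fun _ _ ↦ rfl) (restrictHom_simple M hST)

theorem restrictIncl_comp_restrictHom {S T : Set V} (hST : S ⊆ T) :
    (M.restrictIncl T).comp (M.restrictHom hST) = M.restrictIncl S :=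
  (M.restrict S).toCoxeterSystem.ext_simple fun a ↦ by
    simp [restrictHom_simple, restrictIncl_simple]

variable {S₁ S₂ : Set V} {Q : Type*} [Group Q]

theorem hom_ext_of_comp_restrictIncl (hcover : ∀ v, v ∈ S₁ ∨ v ∈ S₂) {h h' : M.Group →* Q}
    (h₁ : h.comp (M.restrictIncl S₁) = h'.comp (M.restrictIncl S₁))
    (h₂ : h.comp (M.restrictIncl S₂) = h'.comp (M.restrictIncl S₂)) : h = h' := by
  refine M.toCoxeterSystem.ext_simple fun v ↦ ?_
  rcases hcover v with hv | hv
  · simpa [restrictIncl_simple] using DFunLike.congr_fun h₁ ((M.restrict S₁).simple ⟨v, hv⟩)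
  · simpa [restrictIncl_simple] using DFunLike.congr_fun h₂ ((M.restrict S₂).simple ⟨v, hv⟩)

theorem map_simple_mul_map_simple_pow {S : Set V} (k : (M.restrict S).Group →* Q) (a b : S) :
    (k ((M.restrict S).simple a) * k ((M.restrict S).simple b)) ^ M a b = 1 := by
  rw [← map_mul, ← map_pow]
  exact (congrArg k ((M.restrict S).toCoxeterSystem.simple_mul_simple_pow a b)).trans k.map_one

theorem existsUnique_hom_comp_restrictIncl_eq
    (hS : ∀ v w, M v w ≠ 0 → (v ∈ S₁ ∧ w ∈ S₁) ∨ (v ∈ S₂ ∧ w ∈ S₂))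
    {k₁ : (M.restrict S₁).Group →* Q} {k₂ : (M.restrict S₂).Group →* Q}
    (hk : k₁.comp (M.restrictHom (Set.inter_subset_left (s := S₁) (t := S₂))) =
      k₂.comp (M.restrictHom (Set.inter_subset_right (s := S₁) (t := S₂)))) :
    ∃! h : M.Group →* Q, h.comp (M.restrictIncl S₁) = k₁ ∧ h.comp (M.restrictIncl S₂) = k₂ := by
  classical
  have hcover (v : V) : v ∈ S₁ ∨ v ∈ S₂ := (hS v v (by simp)).imp And.left And.left
  let f (v : V) : Q := if hv : v ∈ S₁ then k₁ ((M.restrict S₁).simple ⟨v, hv⟩)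
    else k₂ ((M.restrict S₂).simple ⟨v, (hcover v).resolve_left hv⟩)
  have hf₁ (a : S₁) : f a = k₁ ((M.restrict S₁).simple a) := dif_pos a.2
  have hf₂ (a : S₂) : f a = k₂ ((M.restrict S₂).simple a) := by
    by_cases ha : (a : V) ∈ S₁
    · simpa [restrictHom_simple, hf₁ ⟨a, ha⟩] using
        DFunLike.congr_fun hk ((M.restrict (S₁ ∩ S₂)).simple ⟨a, ha, a.2⟩)
    · exact dif_neg ha
  have hlift : M.IsLiftable f := fun v w ↦ by
    by_cases h0 : M v w = 0
    · rw [h0, pow_zero]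
    rcases hS v w h0 with ⟨hv, hw⟩ | ⟨hv, hw⟩
    · rw [hf₁ ⟨v, hv⟩, hf₁ ⟨w, hw⟩, map_simple_mul_map_simple_pow M k₁ ⟨v, hv⟩ ⟨w, hw⟩]
    · rw [hf₂ ⟨v, hv⟩, hf₂ ⟨w, hw⟩, map_simple_mul_map_simple_pow M k₂ ⟨v, hv⟩ ⟨w, hw⟩]
  have hsimple (v : V) : M.toCoxeterSystem.lift ⟨f, hlift⟩ (M.simple v) = f v :=
    M.toCoxeterSystem.lift_apply_simple hlift v
  have h₁ : (M.toCoxeterSystem.lift ⟨f, hlift⟩).comp (M.restrictIncl S₁) = k₁ :=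
    (M.restrict S₁).toCoxeterSystem.ext_simple fun a ↦ by simp [restrictIncl_simple, hsimple, hf₁]
  have h₂ : (M.toCoxeterSystem.lift ⟨f, hlift⟩).comp (M.restrictIncl S₂) = k₂ :=
    (M.restrict S₂).toCoxeterSystem.ext_simple fun a ↦ by simp [restrictIncl_simple, hsimple, hf₂]
  exact ⟨_, ⟨h₁, h₂⟩, fun h hh ↦
    hom_ext_of_comp_restrictIncl M hcover (hh.1.trans h₁.symm) (hh.2.trans h₂.symm)⟩

end Parabolic

/-! ### Finite presentability and coherence -/

section FinitelyPresented

open Subgroup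

variable {G H : Type*} [Group G] [Group H]

theorem finitelyPresented_iff_isFinitelyPresented :
    Group.FinitelyPresented G ↔ Group.IsFinitelyPresented G := by
  refine ⟨fun ⟨n, rels, hrels, ⟨e⟩⟩ ↦ ?_, fun _ ↦ ?_⟩
  · have := hrels.to_subtype
    exact .equiv e
  · obtain ⟨n, rels, hrels, ⟨e⟩⟩ :=
      Group.IsFinitelyPresented.exists_mulEquiv_presentedGroup (G := G)
    exact ⟨n, rels, hrels, ⟨e.symm⟩⟩

theorem subgroup_fg_map {K : Subgroup G} (hK : K.FG) (f : G →* H) : (K.map f).FG := by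
  rw [fg_iff_submonoid_fg] at hK ⊢
  exact hK.map f

theorem coherent_of_injective {f : H →* G} (hf : Function.Injective f) (hG : Group.Coherent G) :
    Group.Coherent H := fun K hK ↦ by
  have := finitelyPresented_iff_isFinitelyPresented.1 (hG _ (subgroup_fg_map hK f))
  exact finitelyPresented_iff_isFinitelyPresented.2 (.equiv (K.equivMapOfInjective f hf).symm)

theorem slender_of_surjective {f : G →* H} (hf : Function.Surjective f) (hG : Group.Slender G) :
    Group.Slender H := fun K ↦ by
  simpa [map_comap_eq_self_of_surjective hf] using subgroup_fg_map (hG (K.comap f)) f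

theorem fg_of_slender {A K : Subgroup G} (hA : Group.Slender A) (hK : K ≤ A) : K.FG := by
  simpa [subgroupOf_map_subtype, inf_eq_left.2 hK] using
    subgroup_fg_map (hA (K.subgroupOf A)) A.subtype

theorem isFinitelyPresented_of_coherent {A K : Subgroup G} (hA : Group.Coherent A) (hK : K ≤ A)
    (hfg : K.FG) : Group.IsFinitelyPresented K := by
  rw [← Group.fg_iff_subgroup_fg] at hfg
  have hfg' := subgroup_fg_map hfg.out (inclusion hK)
  rw [← MonoidHom.range_eq_map] at hfg'
  have := finitelyPresented_iff_isFinitelyPresented.1 (hA _ hfg')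
  exact .equiv (MonoidHom.ofInjective (inclusion_injective hK)).symm

theorem ker_isFinitelyNormallyGenerated_of_surjective [Group.FG G]
    [hH : Group.IsFinitelyPresented H] {f : G →* H} (hf : Function.Surjective f) :
    f.ker.IsFinitelyNormallyGenerated := by
  obtain ⟨n, θ, hθ, R, hR, hRθ⟩ := hH.out
  obtain ⟨S, hS, hSfin⟩ := Group.fg_iff.1 ‹Group.FG G›
  obtain ⟨ψ, rfl⟩ : ∃ ψ : FreeGroup (Fin n) →* G, f.comp ψ = θ := by
    choose lift hlift using fun i ↦ hf (θ (.of i))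
    exact ⟨FreeGroup.lift lift, by ext i; simp [hlift]⟩
  choose w hw using fun g : G ↦ hθ (f g)
  set N := normalClosure (ψ '' R ∪ (fun s ↦ (ψ (w s))⁻¹ * s) '' S)
  have hRN : normalClosure R ≤ N.comap ψ :=
    normalClosure_le_normal fun r hr ↦ subset_normalClosure (.inl ⟨r, hr, rfl⟩)
  have hNf : N ≤ f.ker := by
    refine normalClosure_le_normal ?_
    rintro _ (⟨r, hr, rfl⟩ | ⟨s, -, rfl⟩)
    · exact hRθ.le (subset_normalClosure hr)
    · simpa using inv_mul_eq_one.2 (hw s)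
  have htop : ψ.range ⊔ N = ⊤ := by
    refine top_le_iff.1 (hS ▸ (closure_le _).2 fun s hs ↦ mem_sup_of_normal_right.2
      ⟨ψ (w s), ⟨_, rfl⟩, (ψ (w s))⁻¹ * s, subset_normalClosure (.inr ⟨s, hs, rfl⟩), by group⟩)
  refine ⟨_, (hR.image _).union (hSfin.image _), le_antisymm hNf fun g hg ↦ ?_⟩
  obtain ⟨_, ⟨u, rfl⟩, m, hm, rfl⟩ := mem_sup_of_normal_right.1 (htop.ge (mem_top g))
  have hu : u ∈ (f.comp ψ).ker := by
    simpa [MonoidHom.mem_ker, MonoidHom.mem_ker.1 (hNf hm)] using hg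
  exact mul_mem (hRN (hRθ.ge hu)) hm

variable {φ : G →* H}

theorem exists_finite_inf_ker_le_normalClosure {E : Subgroup G} (hE : E.FG)
    (hφE : Group.IsFinitelyPresented (E.map φ)) :
    ∃ R : Set G, R.Finite ∧ R ⊆ φ.ker ∧ E ⊓ φ.ker ≤ normalClosure R := by
  have := (Group.fg_iff_subgroup_fg E).2 hE
  obtain ⟨R, hR, hRker⟩ :=
    ker_isFinitelyNormallyGenerated_of_surjective (φ.subgroupMap_surjective E)
  rw [Subgroup.ker_subgroupMap] at hRker
  refine ⟨E.subtype '' R, hR.image _, ?_, ?_⟩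
  · rintro _ ⟨r, hr, rfl⟩
    exact mem_subgroupOf.1 (hRker.le (subset_normalClosure hr))
  · rw [inf_comm, ← subgroupOf_map_subtype, ← hRker]
    exact map_normalClosure_le ..

theorem exists_finite_closure_sup_ker_eq {L : Subgroup G} (hL : φ.ker ≤ L) (hφL : (L.map φ).FG) :
    ∃ S : Set G, S.Finite ∧ closure S ⊔ φ.ker = L := by
  obtain ⟨S, hS, hSfin⟩ := (fg_iff _).1 hφL
  have hSL : S ⊆ φ '' L := by simpa [hS] using subset_closure (k := S)
  obtain ⟨T, -, hT, rfl⟩ := hSfin.exists_subset_finite_image_eq hSL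
  refine ⟨T, hT, ?_⟩
  rw [← comap_map_eq, MonoidHom.map_closure, hS, comap_map_eq_self hL]

end FinitelyPresented

/-! ### Groups acting on trees -/

section LocallyInjective

variable {V W : Type*} {H : SimpleGraph V} {T : SimpleGraph W}

theorem isPath_map_of_locallyInjective (hT : T.IsAcyclic) (π : H →g T)
    (hπ : ∀ ⦃z z₁ z₂⦄, H.Adj z z₁ → H.Adj z z₂ → π z₁ = π z₂ → z₁ = z₂) {z z' : V}
    {p : H.Walk z z'} (hp : p.IsPath) : (p.map π).IsPath := by
  rw [hT.isPath_iff_isChain, SimpleGraph.Walk.edges_map]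
  induction p with
  | nil => simp
  | @cons z z₁ z' h p ih =>
    rw [SimpleGraph.Walk.cons_isPath_iff] at hp
    cases p with
    | nil => simp
    | @cons _ z₂ _ h₁ p =>
      refine List.isChain_cons_cons.2 ⟨fun heq ↦ ?_, ih hp.1⟩
      have hback : π z = π z₂ := by
        rcases Sym2.eq_iff.1 heq with ⟨hzz₁, -⟩ | ⟨hzz₂, -⟩
        · exact ((π.map_adj h).ne hzz₁).elim
        · exact hzz₂
      obtain rfl := hπ h.symm h₁ hback
      exact hp.2 (by simp)

theorem eq_of_reachable_of_map_eq (hT : T.IsAcyclic) (π : H →g T)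
    (hπ : ∀ ⦃z z₁ z₂⦄, H.Adj z z₁ → H.Adj z z₂ → π z₁ = π z₂ → z₁ = z₂) {z z' : V}
    (h : H.Reachable z z') (hzz' : π z = π z') : z = z' := by
  obtain ⟨p, hp⟩ := h.exists_isPath
  have hclosed : ((p.map π).copy rfl hzz'.symm).IsPath :=
    (SimpleGraph.Walk.isPath_copy ..).2 (isPath_map_of_locallyInjective hT π hπ hp)
  have hlength := SimpleGraph.Walk.length_eq_zero_iff.2 (SimpleGraph.Walk.isPath_iff_nil.1 hclosed)
  exact SimpleGraph.Walk.eq_of_length_eq_zero (by simpa using hlength)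

end LocallyInjective

section Sections

open MulAction

variable {F X Z : Type*} [Group F] [MulAction F X] [MulAction F Z] {T : SimpleGraph X}

/-- The graph on `Z` whose edges are the translates of the edges between the points `s y`, `y ∈ Y`,
lying over edges of `T`: the lift along `π : Z → X` of the subgraph of `T` spanned by `F • Y`. -/
def translateGraph (F : Type*) [SMul F Z] (T : SimpleGraph X) (π : Z → X) (s : X → Z) (Y : Set X) :
    SimpleGraph Z where
  Adj z z' := T.Adj (π z) (π z') ∧ ∃ g : F, ∃ y ∈ Y, ∃ y' ∈ Y, z = g • s y ∧ z' = g • s y'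
  symm := ⟨fun _ _ ⟨h, g, y, hy, y', hy', hz, hz'⟩ ↦ ⟨h.symm, g, y', hy', y, hy, hz', hz⟩⟩
  loopless := ⟨fun _ h ↦ T.irrefl h.1⟩

variable {π : Z →[F] X} {s : X → Z} {Y : Set X}

theorem translateGraph_adj_smul (hinv : ∀ (g : F) {x y : X}, T.Adj x y → T.Adj (g • x) (g • y))
    (g : F) {z z' : Z} (h : (translateGraph F T π s Y).Adj z z') :
    (translateGraph F T π s Y).Adj (g • z) (g • z') := by
  obtain ⟨h, k, y, hy, y', hy', rfl, rfl⟩ := h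
  refine ⟨by simpa using hinv g h, g * k, y, hy, y', hy', ?_, ?_⟩ <;> rw [mul_smul]

theorem translateGraph_reachable_smul
    (hinv : ∀ (g : F) {x y : X}, T.Adj x y → T.Adj (g • x) (g • y))
    (hs : ∀ y ∈ Y, π (s y) = y) (hY : (T.induce Y).Preconnected) {A : Set F}
    (hA : Subgroup.closure A = ⊤) {x₀ : X} (hx₀ : x₀ ∈ Y)
    (hAY : ∀ a ∈ A, a • x₀ ∈ Y ∧ a • s x₀ = s (a • x₀)) (g : F) :
    (translateGraph F T π s Y).Reachable (s x₀) (g • s x₀) := by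
  let toHom (g : F) : translateGraph F T π s Y →g translateGraph F T π s Y :=
    ⟨(g • ·), translateGraph_adj_smul hinv g⟩
  let sHom : T.induce Y →g translateGraph F T π s Y :=
    ⟨fun y ↦ s y, fun {y y'} h ↦
      ⟨by rw [hs _ y.2, hs _ y'.2]; exact h, 1, y, y.2, y', y'.2, by simp, by simp⟩⟩
  induction hA.ge (Subgroup.mem_top g) using Subgroup.closure_induction with
  | mem a ha =>
    rw [(hAY a ha).2]
    exact (hY ⟨x₀, hx₀⟩ ⟨a • x₀, (hAY a ha).1⟩).map sHom
  | one => rw [one_smul]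
  | mul g h _ _ hg hh =>
    rw [mul_smul]
    exact hg.trans (hh.map (toHom g))
  | inv g _ hg =>
    have := hg.symm.map (toHom g⁻¹)
    simpa [toHom] using this

theorem stabilizer_le_stabilizer_of_section (hT : T.IsAcyclic)
    (hinv : ∀ (g : F) {x y : X}, T.Adj x y → T.Adj (g • x) (g • y))
    (hs : ∀ y ∈ Y, π (s y) = y) (hY : (T.induce Y).Preconnected) {A : Set F}
    (hA : Subgroup.closure A = ⊤) {x₀ : X} (hx₀ : x₀ ∈ Y)
    (hAY : ∀ a ∈ A, a • x₀ ∈ Y ∧ a • s x₀ = s (a • x₀))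
    (hloc : ∀ g : F, ∀ y₁ ∈ Y, ∀ y₁' ∈ Y, ∀ y₂ ∈ Y, ∀ y₂' ∈ Y, T.Adj y₁ y₁' →
      g • s y₁ = s y₂ → g • y₁' = y₂' → g • s y₁' = s y₂') :
    stabilizer F x₀ ≤ stabilizer F (s x₀) := by
  intro g hg
  let πHom : translateGraph F T π s Y →g T := ⟨π, fun h ↦ h.1⟩
  refine (eq_of_reachable_of_map_eq hT πHom ?_
    (translateGraph_reachable_smul hinv hs hY hA hx₀ hAY g) ?_).symm
  · rintro z z₁ z₂ ⟨hadj, g₁, y₁, hy₁, y₁', hy₁', rfl, rfl⟩ ⟨-, g₂, y₂, hy₂, y₂', hy₂', hz, rfl⟩ heq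
    have hadj' : T.Adj y₁ y₁' := by simpa [hs _ hy₁, hs _ hy₁'] using hinv g₁⁻¹ hadj
    replace heq : g₁ • y₁' = g₂ • y₂' := by simpa [πHom, hs _ hy₁', hs _ hy₂'] using heq
    have := hloc (g₂⁻¹ * g₁) y₁ hy₁ y₁' hy₁' y₂ hy₂ y₂' hy₂' hadj'
      (by rw [mul_smul, hz, inv_smul_smul]) (by rw [mul_smul, heq, inv_smul_smul])
    rwa [mul_smul, inv_smul_eq_iff] at this
  · simpa [πHom, hs _ hx₀] using (mem_stabilizer_iff.1 hg).symm

end Sections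

section CoveringSection

open MulAction

variable {F X Ω : Type*} [Group F] [MulAction F X] [MulAction F Ω] {M : Subgroup F}

theorem exists_finite_transporters {B : Set Ω} (hB : B.Finite)
    (hstab : ∀ b ∈ B, ∃ S : Set F, S.Finite ∧ Subgroup.closure S ⊔ M = stabilizer F b) {A : Set F}
    (hA : A.Finite) :
    ∃ D : Set F, D.Finite ∧ A ⊆ D ∧ ∀ b ∈ B, ∀ b' ∈ B, ∀ g : F, g • b = b' →
      ∃ d ∈ D, d • b = b' ∧ d⁻¹ * g ∈ Subgroup.closure (D ∩ stabilizer F b) ⊔ M := by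
  choose! S hS hSM using hstab
  have htrans (b b' : Ω) : ∃ d : F, (∃ g : F, g • b = b') → d • b = b' := by
    by_cases h : ∃ g : F, g • b = b'
    · exact h.imp fun _ hg _ ↦ hg
    · exact ⟨1, fun hg ↦ (h hg).elim⟩
  choose d hd using htrans
  refine ⟨A ∪ (⋃ b ∈ B, S b) ∪ Set.image2 d B B, (hA.union (hB.biUnion hS)).union (hB.image2 _ hB),
    fun a ha ↦ .inl (.inl ha), fun b hb b' hb' g hg ↦ ?_⟩
  have hdb := hd b b' ⟨g, hg⟩
  refine ⟨d b b', .inr ⟨b, hb, b', hb', rfl⟩, hdb, ?_⟩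
  have hmem : (d b b')⁻¹ * g ∈ stabilizer F b := by
    rw [mem_stabilizer_iff, mul_smul, hg, inv_smul_eq_iff, hdb]
  rw [← hSM b hb] at hmem
  have hSD : S b ⊆ (A ∪ (⋃ b ∈ B, S b) ∪ Set.image2 d B B) ∩ stabilizer F b := fun x hx ↦
    ⟨.inl (.inr (Set.mem_biUnion hb hx)),
      (le_sup_left.trans (hSM b hb).le) (Subgroup.subset_closure hx)⟩
  exact sup_le_sup_right (Subgroup.closure_mono hSD) M hmem

variable (F X) in
theorem exists_orbit_section : ∃ (r : X → X) (t : X → F),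
    (∀ x, t x • r x = x) ∧ ∀ (g : F) x, r (g • x) = r x := by
  let r (x : X) : X := (Quotient.mk (orbitRel F X) x).out
  have hr (x : X) : ∃ t : F, t • r x = x :=
    (orbitRel F X).symm (Quotient.mk_out (s := orbitRel F X) x)
  choose t ht using hr
  exact ⟨r, t, ht, fun g x ↦ congr_arg Quotient.out (Quotient.sound (mem_orbit x g))⟩

/-- The equivariant projection `⟨x, g Γₓ⟩ ↦ g • x` of a disjoint union of coset spaces
by subgroups `Γₓ` of the point stabilizers. -/
def cosetProj (Γ : X → Subgroup F) (hΓ : ∀ x, Γ x ≤ stabilizer F x) :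
    (Σ x, F ⧸ Γ x) →[F] X where
  toFun z := ofQuotientStabilizer F z.1 (Subgroup.quotientMapOfLE (hΓ z.1) z.2)
  map_smul' := by
    rintro g ⟨x, ⟨h⟩⟩
    exact mul_smul g h x

theorem exists_finitelyNormallyGenerated_sup_inf_le [hM : M.Normal]
    (hvert : ∀ x : X, ∀ E ≤ stabilizer F x, E.FG →
      ∃ R : Set F, R.Finite ∧ R ⊆ M ∧ E ⊓ M ≤ Subgroup.normalClosure R)
    {E : X → Subgroup F} (hE : ∀ x, E x ≤ stabilizer F x) (hfg : ∀ x, (E x).FG) {Y : Set X}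
    (hY : Y.Finite) :
    ∃ N : Subgroup F, N.Normal ∧ N.IsFinitelyNormallyGenerated ∧ N ≤ M ∧
      ∀ y ∈ Y, (E y ⊔ N) ⊓ M ≤ N := by
  choose R hR hRM hEM using fun x ↦ hvert x (E x) (hE x) (hfg x)
  refine ⟨Subgroup.normalClosure (⋃ y ∈ Y, R y), inferInstance,
    ⟨_, hY.biUnion fun y _ ↦ hR y, rfl⟩,
    Subgroup.normalClosure_le_normal (Set.iUnion₂_subset fun y _ ↦ hRM y), ?_⟩
  rintro y hy g ⟨hg, hgM⟩
  obtain ⟨e, he, n, hn, rfl⟩ := Subgroup.mem_sup_of_normal_right.1 hg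
  have hnM := Subgroup.normalClosure_le_normal (Set.iUnion₂_subset fun y _ ↦ hRM y) hn
  have heM : e ∈ E y ⊓ M := ⟨he, (Subgroup.mul_mem_cancel_right M hnM).1 hgM⟩
  exact mul_mem (Subgroup.normalClosure_mono (Set.subset_biUnion_of_mem hy) (hEM y heM)) hn

theorem exists_equivariant_section [hM : M.Normal] (hMX : ∀ m ∈ M, ∀ x : X, m • x = x)
    (hvert : ∀ x : X, ∀ E ≤ stabilizer F x, E.FG →
      ∃ R : Set F, R.Finite ∧ R ⊆ M ∧ E ⊓ M ≤ Subgroup.normalClosure R)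
    {D : Set F} (hD : D.Finite) {Y : Set X} (hY : Y.Finite) :
    ∃ (N : Subgroup F) (Γ : X → Subgroup F) (π : (Σ x, F ⧸ Γ x) →[F] X) (s : X → Σ x, F ⧸ Γ x),
      N.IsFinitelyNormallyGenerated ∧ N ≤ M ∧ (∀ n ∈ N, ∀ z : Σ x, F ⧸ Γ x, n • z = z) ∧
      (∀ x, π (s x) = x) ∧ (∀ d ∈ D, ∀ y ∈ Y, d • s y = s (d • y)) ∧
      ∀ y ∈ Y, stabilizer F (s y) ⊓ M ≤ N := by
  obtain ⟨r, t, ht, hr⟩ := exists_orbit_section F X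
  let E (x : X) : Subgroup F :=
    .closure (Set.image2 (fun d y ↦ (t (d • y))⁻¹ * d * t y) D {y ∈ Y | r y = x})
  have hE (x : X) : E x ≤ stabilizer F x := by
    refine (Subgroup.closure_le _).2 ?_
    rintro _ ⟨d, -, y, ⟨-, rfl⟩, rfl⟩
    simp only [SetLike.mem_coe, mem_stabilizer_iff, mul_smul, ht, inv_smul_eq_iff]
    rw [← hr d y, ht]
  have hEfg (x : X) : (E x).FG :=
    (Subgroup.fg_iff _).2 ⟨_, rfl, hD.image2 _ (hY.subset (Set.sep_subset ..))⟩
  obtain ⟨N, hN, hNfin, hNM, hEN⟩ :=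
    exists_finitelyNormallyGenerated_sup_inf_le hvert hE hEfg (hY.image r)
  let Γ (x : X) : Subgroup F := E x ⊔ N
  have hΓ (x : X) : Γ x ≤ stabilizer F x := sup_le (hE x) fun n hn ↦ hMX n (hNM hn) x
  refine ⟨N, Γ, cosetProj Γ hΓ, fun x ↦ ⟨r x, t x⟩, hNfin, hNM, ?_, fun x ↦ ht x, ?_, ?_⟩
  · rintro n hn ⟨x, ⟨g⟩⟩
    refine congr_arg (Sigma.mk x) (QuotientGroup.eq.2 (Subgroup.mem_sup_right ?_))
    simpa [mul_assoc] using hN.conj_mem' _ (inv_mem hn) g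
  · intro d hd y hy
    have hmk (x : X) (hx : r y = x) :
        (⟨r y, ↑(d * t y)⟩ : Σ x, F ⧸ Γ x) = ⟨x, ↑(t (d • y))⟩ := by
      subst hx
      have hmem : (t (d • y))⁻¹ * d * t y ∈ E (r y) :=
        Subgroup.subset_closure ⟨d, hd, y, ⟨hy, rfl⟩, rfl⟩
      refine congr_arg (Sigma.mk _) (QuotientGroup.eq.2 (inv_mem_iff.1 ?_))
      exact Subgroup.mem_sup_left (by simpa [mul_assoc] using hmem)
    exact hmk _ (hr d y).symm
  · rintro y hy g ⟨hg, hgM⟩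
    have hΓg : (t y)⁻¹ * g * t y ∈ Γ (r y) := by
      have heq : (↑(g * t y) : F ⧸ Γ (r y)) = t y :=
        sigma_mk_injective (β := fun x ↦ F ⧸ Γ x) hg
      simpa [mul_assoc] using QuotientGroup.eq.1 heq.symm
    have := hN.conj_mem _ (hEN _ ⟨y, hy, rfl⟩ ⟨hΓg, hM.conj_mem' g hgM (t y)⟩) (t y)
    simpa [mul_assoc] using this

end CoveringSection

section TreeAction

open MulAction

variable {F X : Type*} [Group F] [MulAction F X] {T : SimpleGraph X}

theorem smul_section_eq_of_transporter {Z : Type*} [MulAction F Z] {s : X → Z} {D : Set F}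
    {M N : Subgroup F} [M.Normal] (hNZ : ∀ n ∈ N, ∀ z : Z, n • z = z) {y y' : X}
    (hDy : ∀ d ∈ D, d • s y = s (d • y)) (hDy' : ∀ d ∈ D, d • s y' = s (d • y'))
    (hstab : stabilizer F (s y) ⊓ M ≤ N) {g d : F} (hd : d ∈ D)
    (hdg : d⁻¹ * g ∈ Subgroup.closure (D ∩ stabilizer F (y, y')) ⊔ M)
    (hgy : g • s y = s (d • y)) : g • s y' = s (d • y') := by
  obtain ⟨e, he, m, hm, hem⟩ := Subgroup.mem_sup_of_normal_right.1 hdg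
  obtain rfl : g = d * (e * m) := by rw [hem, mul_inv_cancel_left]
  have hDle : Subgroup.closure (D ∩ stabilizer F (y, y')) ≤
      stabilizer F (s y) ⊓ stabilizer F (s y') := by
    rw [Subgroup.closure_le]
    rintro c ⟨hcD, hc⟩
    obtain ⟨hcy, hcy'⟩ := Prod.mk.inj hc
    exact ⟨(hDy c hcD).trans (congr_arg s hcy), (hDy' c hcD).trans (congr_arg s hcy')⟩
  obtain ⟨hey, hey'⟩ := hDle he
  have hmy : m • s y = s y := by
    rwa [← hDy d hd, mul_smul, smul_left_cancel_iff, mul_smul, ← eq_inv_smul_iff,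
      inv_smul_eq_iff.2 (mem_stabilizer_iff.1 hey).symm] at hgy
  rw [mul_smul, mul_smul, hNZ m (hstab ⟨hmy, hm⟩), mem_stabilizer_iff.1 hey', hDy' d hd]

theorem isFinitelyNormallyGenerated_of_isTree [hF : Group.FG F] (hT : T.IsTree)
    (hinv : ∀ (g : F) {x y : X}, T.Adj x y → T.Adj (g • x) (g • y))
    {M : Subgroup F} [M.Normal] (hMX : ∀ m ∈ M, ∀ x : X, m • x = x)
    (hvert : ∀ x : X, ∀ E ≤ stabilizer F x, E.FG →
      ∃ R : Set F, R.Finite ∧ R ⊆ M ∧ E ⊓ M ≤ Subgroup.normalClosure R)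
    (hedge : ∀ x y, T.Adj x y →
      ∃ S : Set F, S.Finite ∧ Subgroup.closure S ⊔ M = stabilizer F (x, y)) :
    M.IsFinitelyNormallyGenerated := by
  classical
  obtain ⟨A, hA, hAfin⟩ := Group.fg_iff.1 hF
  obtain ⟨x₀⟩ := hT.connected.nonempty
  obtain ⟨Y, hx₀Y, hYconn⟩ := SimpleGraph.extend_finset_to_connected hT.connected.preconnected
    (Finset.insert_nonempty x₀ (hAfin.toFinset.image (· • x₀)))
  obtain ⟨hx₀, hAx₀⟩ : x₀ ∈ Y ∧ ∀ a ∈ A, a • x₀ ∈ Y := by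
    simpa [Finset.insert_subset_iff, Finset.image_subset_iff] using hx₀Y
  obtain ⟨D, hD, hAD, htrans⟩ := exists_finite_transporters (M := M) (A := A)
    (B := {b : X × X | b ∈ Y ×ˢ Y ∧ T.Adj b.1 b.2}) ((Y ×ˢ Y).finite_toSet.subset fun _ h ↦ h.1)
    (fun b hb ↦ hedge b.1 b.2 hb.2) hAfin
  obtain ⟨N, Γ, π, s, hN, hNM, hNZ, hπs, hDs, hstab⟩ :=
    exists_equivariant_section hMX hvert hD Y.finite_toSet
  have hle : stabilizer F x₀ ≤ stabilizer F (s x₀) := by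
    refine stabilizer_le_stabilizer_of_section hT.isAcyclic hinv (fun y _ ↦ hπs y)
      hYconn.preconnected hA hx₀ (fun a ha ↦ ⟨hAx₀ a ha, hDs a (hAD ha) x₀ hx₀⟩) ?_
    intro g y₁ hy₁ y₁' hy₁' y₂ hy₂ y₂' hy₂' hadj hsy hy'
    have hy : g • y₁ = y₂ := by simpa [hπs] using congr_arg π hsy
    obtain ⟨d, hd, hdy, hdg⟩ := htrans (y₁, y₁') ⟨Finset.mk_mem_product hy₁ hy₁', hadj⟩ (y₂, y₂')
      ⟨Finset.mk_mem_product hy₂ hy₂', by simpa [hy, hy'] using hinv g hadj⟩ g (Prod.ext hy hy')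
    obtain ⟨rfl, rfl⟩ := Prod.mk.inj hdy
    exact smul_section_eq_of_transporter hNZ (hDs · · y₁ hy₁) (hDs · · y₁' hy₁') (hstab y₁ hy₁)
      hd hdg hsy
  have hMN : M ≤ N := fun m hm ↦ hstab x₀ hx₀ ⟨hle (hMX m hm x₀), hm⟩
  rwa [le_antisymm hMN hNM]

theorem coherent_of_isTree {G : Type*} [Group G] [MulAction G X] (hT : T.IsTree)
    (hinv : ∀ (g : G) {x y : X}, T.Adj x y → T.Adj (g • x) (g • y))
    (hvert : ∀ x : X, Group.Coherent (stabilizer G x))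
    (hedge : ∀ x y, T.Adj x y → Group.Slender (stabilizer G (x, y))) : Group.Coherent G := by
  intro H hH
  obtain ⟨α, _, ψ, hψ⟩ := Group.fg_iff_exists_freeGroup_hom_surjective_finite.1
    ((Group.fg_iff_subgroup_fg H).2 hH)
  let φ : FreeGroup α →* G := H.subtype.comp ψ
  let _ : MulAction (FreeGroup α) X := .compHom X φ
  have hker (m : FreeGroup α) (hm : m ∈ φ.ker) (x : X) : m • x = x :=
    (congr_arg (· • x) (MonoidHom.mem_ker.1 hm)).trans (one_smul G x)
  have hφker : φ.ker.IsFinitelyNormallyGenerated := by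
    refine isFinitelyNormallyGenerated_of_isTree hT (fun g ↦ hinv (φ g)) hker
      (fun x E hEx hE ↦ ?_) (fun x y hxy ↦ ?_)
    · exact exists_finite_inf_ker_le_normalClosure hE
        (isFinitelyPresented_of_coherent (hvert x) (Subgroup.map_le_iff_le_comap.2 hEx)
          (subgroup_fg_map hE φ))
    · exact exists_finite_closure_sup_ker_eq
        (fun m hm ↦ Prod.ext (hker m hm x) (hker m hm y))
        (fg_of_slender (hedge x y hxy) (Subgroup.map_le_iff_le_comap.2 le_rfl))
  rw [finitelyPresented_iff_isFinitelyPresented]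
  refine .of_surjective ψ hψ ?_
  rwa [show ψ.ker = φ.ker from
    (MonoidHom.ker_comp_of_injective _ _ H.subtype_injective).symm]

end TreeAction

/-! ### Amalgamated products -/

section CosetGraph

open MulAction

variable {ι G : Type*} [Group G] {A : ι → Subgroup G}

/-- The coset graph of a family of subgroups: its vertices are the left cosets of the members, two
cosets of distinct members being adjacent when they intersect. For an amalgamated product
`A₁ ∗_C A₂` this is the Bass–Serre tree. -/
def cosetGraph (A : ι → Subgroup G) : SimpleGraph (Σ i, G ⧸ A i) where
  Adj x y := x.1 ≠ y.1 ∧ ∃ g : G, x.2 = g ∧ y.2 = g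
  symm := ⟨fun _ _ ⟨hne, g, hx, hy⟩ ↦ ⟨hne.symm, g, hy, hx⟩⟩
  loopless := ⟨fun _ h ↦ h.1 rfl⟩

theorem cosetGraph_adj_smul (k : G) {x y : Σ i, G ⧸ A i} (h : (cosetGraph A).Adj x y) :
    (cosetGraph A).Adj (k • x) (k • y) := by
  obtain ⟨hne, g, hx, hy⟩ := h
  exact ⟨hne, k * g, congr_arg (k • ·) hx, congr_arg (k • ·) hy⟩

theorem cosetGraph_reachable_mk_mk (i j : ι) (g : G) :
    (cosetGraph A).Reachable ⟨i, g⟩ ⟨j, g⟩ := by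
  obtain rfl | hij := eq_or_ne i j
  · rfl
  · exact SimpleGraph.Adj.reachable ⟨hij, g, rfl, rfl⟩

theorem cosetGraph_reachable_mk_mul (i : ι) {g : G} (hg : g ∈ ⨆ j, A j) :
    ∀ h : G, (cosetGraph A).Reachable ⟨i, h⟩ ⟨i, ↑(h * g)⟩ := by
  refine Subgroup.iSup_induction A
    (C := fun g ↦ ∀ h : G, (cosetGraph A).Reachable ⟨i, h⟩ ⟨i, ↑(h * g)⟩) hg ?_ ?_ ?_
  · intro j a ha h
    have hja : ((h * a : G) : G ⧸ A j) = h := QuotientGroup.mk_mul_of_mem h ha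
    refine (cosetGraph_reachable_mk_mk i j h).trans ?_
    rw [← hja]
    exact cosetGraph_reachable_mk_mk j i (h * a)
  · intro h
    rw [mul_one]
  · intro g k hg hk h
    rw [← mul_assoc]
    exact (hg h).trans (hk _)

theorem cosetGraph_connected [Nonempty ι] (hA : ⨆ i, A i = ⊤) : (cosetGraph A).Connected := by
  have : Nonempty (Σ i, G ⧸ A i) := ⟨⟨Classical.arbitrary ι, (1 : G)⟩⟩
  refine ⟨?_⟩
  rintro ⟨i, x⟩ ⟨j, y⟩
  obtain ⟨g, rfl⟩ := QuotientGroup.mk_surjective x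
  obtain ⟨h, rfl⟩ := QuotientGroup.mk_surjective y
  have hgh := cosetGraph_reachable_mk_mul j (hA.ge (Subgroup.mem_top (g⁻¹ * h))) g
  rw [mul_inv_cancel_left] at hgh
  exact (cosetGraph_reachable_mk_mk i j g).trans hgh

theorem stabilizer_sigma_mk_one (i : ι) :
    stabilizer G (⟨i, (1 : G)⟩ : Σ i, G ⧸ A i) = A i := by
  ext g
  simp [Sigma.smul_mk, QuotientGroup.eq]

theorem coherent_of_isTree_cosetGraph (hT : (cosetGraph A).IsTree)
    (hA : ∀ i, Group.Coherent (A i))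
    (hAA : ∀ i j, i ≠ j → Group.Slender (A i ⊓ A j : Subgroup G)) : Group.Coherent G := by
  have hmk (i : ι) (g : G) : (⟨i, g⟩ : Σ i, G ⧸ A i) = g • ⟨i, (1 : G)⟩ := by
    rw [Sigma.smul_mk, MulAction.Quotient.smul_coe, smul_eq_mul, mul_one]
  refine coherent_of_isTree hT cosetGraph_adj_smul ?_ ?_
  · rintro ⟨i, x⟩
    obtain ⟨g, rfl⟩ := QuotientGroup.mk_surjective x
    let e := (stabilizerEquivStabilizer (hmk i g)).symm.trans
      (MulEquiv.subgroupCongr (stabilizer_sigma_mk_one i))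
    exact coherent_of_injective (f := e.toMonoidHom) e.injective (hA i)
  · rintro ⟨i, x⟩ ⟨j, y⟩ ⟨hij, g, hx, hy⟩
    obtain rfl : x = g := hx
    obtain rfl : y = g := hy
    have hstab : stabilizer G ((⟨i, (1 : G)⟩, ⟨j, (1 : G)⟩) : (Σ i, G ⧸ A i) × Σ i, G ⧸ A i) =
        A i ⊓ A j := by
      ext k
      exact Prod.ext_iff.trans (and_congr (SetLike.ext_iff.1 (stabilizer_sigma_mk_one i) k)
        (SetLike.ext_iff.1 (stabilizer_sigma_mk_one j) k))
    let e := (MulEquiv.subgroupCongr hstab.symm).trans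
      (stabilizerEquivStabilizer (congr_arg₂ Prod.mk (hmk i g) (hmk j g)))
    exact slender_of_surjective (f := e.toMonoidHom) e.surjective (hAA i j hij)

theorem sigma_quotient_eq_of_mem {x y : Σ i, G ⧸ A i} (hxy : x.1 = y.1) {g k : G} (hx : x.2 = g)
    (hy : y.2 = k) (hgk : g⁻¹ * k ∈ A x.1) : x = y := by
  obtain ⟨i, x⟩ := x
  obtain ⟨j, y⟩ := y
  obtain rfl : i = j := hxy
  exact congr_arg (Sigma.mk i) (hx.trans ((QuotientGroup.eq.2 hgk).trans hy.symm))

theorem exists_word_of_isChain_edges {A : Bool → Subgroup G} {C : Subgroup G} (hC : ∀ i, C ≤ A i)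
    {v v' w : Σ i, G ⧸ A i} (h : (cosetGraph A).Adj v v') (p : (cosetGraph A).Walk v' w)
    (hp : (p.cons h).edges.IsChain (· ≠ ·)) {g : G} (hv : v.2 = g) (hv' : v'.2 = g) :
    ∃ l : List (Σ i, A i), l.IsChain (·.1 ≠ ·.1) ∧ (∀ a ∈ l, (a.2 : G) ∉ C) ∧
      (∀ a ∈ l.head?, a.1 = v'.1) ∧ l.length = p.length ∧
      w.2 = (g * (l.map fun a ↦ (a.2 : G)).prod : G) := by
  induction p generalizing v g with
  | nil => exact ⟨[], by simp [hv']⟩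
  | @cons v' v'' w h' p ih =>
    obtain ⟨hne, k, hk', hk''⟩ := id h'
    obtain ⟨hadj, hp⟩ := List.isChain_cons_cons.1 hp
    obtain ⟨l, hl, hlC, hhead, hlen, hw⟩ := ih h' hp hk' hk''
    have ha : g⁻¹ * k ∈ A v'.1 := QuotientGroup.eq.1 (hv'.symm.trans hk')
    have haC : g⁻¹ * k ∉ C := fun hgk ↦ by
      have hvv'' : v = v'' := sigma_quotient_eq_of_mem
        ((Bool.eq_not_of_ne h.1).trans (Bool.eq_not_of_ne hne.symm).symm) hv hk'' (hC _ hgk)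
      exact hadj (hvv'' ▸ Sym2.eq_swap)
    refine ⟨⟨v'.1, _, ha⟩ :: l, ?_, ?_, ?_, ?_, ?_⟩
    · exact List.isChain_cons.2 ⟨fun b hb ↦ (hhead b hb).symm ▸ hne, hl⟩
    · exact List.forall_mem_cons.2 ⟨haC, hlC⟩
    · simp
    · simp [hlen]
    · simp [hw, mul_assoc]

theorem cosetGraph_isAcyclic {A : Bool → Subgroup G} {C : Subgroup G} (hC : ∀ i, C ≤ A i)
    (hred : ∀ l : List (Σ i, A i), l.IsChain (·.1 ≠ ·.1) → (∀ a ∈ l, (a.2 : G) ∉ C) →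
      (l.map fun a ↦ (a.2 : G)).prod ∈ C → l = []) : (cosetGraph A).IsAcyclic := by
  rintro v (_ | ⟨h, p⟩) hc
  · exact hc.not_nil .nil
  obtain ⟨hne, g, hv, hv'⟩ := id h
  obtain ⟨l, hl, hlC, hhead, hlen, hprod⟩ :=
    exists_word_of_isChain_edges hC h p hc.edges_nodup.isChain hv hv'
  have hl₀ : l ≠ [] := by
    rintro rfl
    have := hc.three_le_length
    simp only [List.length_nil, SimpleGraph.Walk.length_cons] at hlen this
    omega
  have hmem : (l.map fun a ↦ (a.2 : G)).prod ∈ A v.1 := by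
    simpa using QuotientGroup.eq.1 (hv.symm.trans hprod)
  by_cases hlast : (l.map fun a ↦ (a.2 : G)).prod ∈ C
  · exact hl₀ (hred l hl hlC hlast)
  -- Prepending the inverse of the product gives a reduced word with product `1`.
  · refine List.cons_ne_nil _ _ (hred (⟨v.1, _, inv_mem hmem⟩ :: l) ?_ ?_ ?_)
    · exact List.isChain_cons.2 ⟨fun b hb ↦ (hhead b hb).symm ▸ hne, hl⟩
    · exact List.forall_mem_cons.2 ⟨fun hC ↦ hlast (inv_mem_iff.1 hC), hlC⟩
    · simp

end CosetGraph

section PushoutI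

open Monoid PushoutI

variable {ι C : Type*} {A : ι → Type*} [∀ i, Group (A i)] [Group C] {φ : ∀ i, C →* A i}

theorem base_range_le_of_range (i : ι) :
    (base φ).range ≤ (of i : A i →* PushoutI φ).range := by
  rintro _ ⟨c, rfl⟩
  exact ⟨φ i c, of_apply_eq_base φ i c⟩

theorem iSup_range_of_eq_top [Nonempty ι] :
    ⨆ i, (of i : A i →* PushoutI φ).range = ⊤ := by
  refine eq_top_iff.2 fun x _ ↦ ?_
  induction x using PushoutI.induction_on with
  | of i a => exact Subgroup.mem_iSup_of_mem i ⟨a, rfl⟩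
  | base c =>
    exact Subgroup.mem_iSup_of_mem (Classical.arbitrary ι) (base_range_le_of_range _ ⟨c, rfl⟩)
  | mul x y hx hy => exact mul_mem (hx trivial) (hy trivial)

theorem eq_nil_of_prod_mem_base_range (hφ : ∀ i, Function.Injective (φ i))
    (l : List (Σ i, (of i : A i →* PushoutI φ).range)) (hl : l.IsChain (·.1 ≠ ·.1))
    (hlC : ∀ a ∈ l, (a.2 : PushoutI φ) ∉ (base φ).range)
    (hprod : (l.map fun a ↦ (a.2 : PushoutI φ)).prod ∈ (base φ).range) : l = [] := by
  choose letter hletter using fun a : Σ i, (of i : A i →* PushoutI φ).range ↦ a.2.2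
  have hletterC : ∀ a ∈ l, letter a ∉ (φ a.1).range := by
    rintro a ha ⟨c, hc⟩
    refine hlC a ha ⟨c, ?_⟩
    rw [← hletter a, ← hc, of_apply_eq_base]
  let w : CoprodI.Word A :=
    { toList := l.map fun a ↦ ⟨a.1, letter a⟩
      ne_one := by
        simp only [List.forall_mem_map]
        exact fun a ha h ↦ hletterC a ha (h ▸ one_mem _)
      chain_ne := (List.isChain_map _).2 hl }
  have hw : Reduced φ w := List.forall_mem_map.2 hletterC
  have hwprod : ofCoprodI (φ := φ) w.prod = (l.map fun a ↦ (a.2 : PushoutI φ)).prod := by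
    simp [w, CoprodI.Word.prod, map_list_prod, Function.comp_def, hletter]
  have hempty : w = .empty := hw.eq_empty_of_mem_range hφ (hwprod ▸ hprod)
  exact List.map_eq_nil_iff.1 (congr_arg CoprodI.Word.toList hempty)

theorem coherent_pushoutI {A : Bool → Type*} [∀ i, Group (A i)] {φ : ∀ i, C →* A i}
    (hφ : ∀ i, Function.Injective (φ i)) (hA : ∀ i, Group.Coherent (A i))
    (hC : Group.Slender C) : Group.Coherent (PushoutI φ) := by
  refine coherent_of_isTree_cosetGraph (A := fun i ↦ (of i : A i →* PushoutI φ).range)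
    ⟨cosetGraph_connected iSup_range_of_eq_top,
      cosetGraph_isAcyclic base_range_le_of_range (eq_nil_of_prod_mem_base_range hφ)⟩ ?_ ?_
  · intro i
    let e := MonoidHom.ofInjective (of_injective hφ i)
    exact coherent_of_injective (f := e.symm.toMonoidHom) e.symm.injective (hA i)
  · intro i j hij
    rw [inf_of_range_eq_base_range hφ hij]
    exact slender_of_surjective (base φ).rangeRestrict_surjective hC

end PushoutI

/-! ### Coxeter groups as amalgamated products -/

section Amalgam

open Monoid

variable {V : Type*} (M : CoxeterMatrix V)

theorem exists_injective_hom_pushoutI_restrictHom {S : Bool → Set V}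
    (hS : ∀ v w, M v w ≠ 0 → (v ∈ S true ∧ w ∈ S true) ∨ (v ∈ S false ∧ w ∈ S false))
    (hinter : ∀ b, S true ∩ S false ⊆ S b) :
    ∃ h : M.Group →* PushoutI (fun b ↦ M.restrictHom (hinter b)), Function.Injective h := by
  let φ b := M.restrictHom (hinter b)
  obtain ⟨h, ⟨htrue, hfalse⟩, -⟩ := existsUnique_hom_comp_restrictIncl_eq M hS
    ((PushoutI.of_comp_eq_base (φ := φ) true).trans (PushoutI.of_comp_eq_base false).symm)
  have hcomp (b : Bool) : (M.restrictIncl (S b)).comp (φ b) = M.restrictIncl _ :=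
    restrictIncl_comp_restrictHom M (hinter b)
  let r : PushoutI φ →* M.Group := PushoutI.lift (fun b ↦ M.restrictIncl (S b)) _ hcomp
  have hr (b : Bool) : r.comp (PushoutI.of b) = M.restrictIncl (S b) :=
    MonoidHom.ext fun x ↦ PushoutI.lift_of (i := b) _ _ hcomp x
  have hrh : r.comp h = MonoidHom.id M.Group := by
    refine hom_ext_of_comp_restrictIncl M
      (fun v ↦ (hS v v (by simp)).imp And.left And.left) ?_ ?_
    · rw [MonoidHom.comp_assoc, htrue, hr, MonoidHom.id_comp]
    · rw [MonoidHom.comp_assoc, hfalse, hr, MonoidHom.id_comp]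
  exact ⟨h, Function.LeftInverse.injective (DFunLike.congr_fun hrh)⟩

variable {S₁ S₂ : Set V}

theorem coherent_of_coherent_restrict
    (hS : ∀ v w, M v w ≠ 0 → (v ∈ S₁ ∧ w ∈ S₁) ∨ (v ∈ S₂ ∧ w ∈ S₂))
    (h₁ : Group.Coherent (M.restrict S₁).Group) (h₂ : Group.Coherent (M.restrict S₂).Group)
    (h₁₂ : Group.Slender (M.restrict (S₁ ∩ S₂)).Group) : Group.Coherent M.Group := by
  let S (b : Bool) : Set V := cond b S₁ S₂
  have hinter : ∀ b, S true ∩ S false ⊆ S b :=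
    Bool.forall_bool.2 ⟨Set.inter_subset_right, Set.inter_subset_left⟩
  obtain ⟨h, hh⟩ := exists_injective_hom_pushoutI_restrictHom M (S := S) hS hinter
  exact coherent_of_injective hh <| coherent_pushoutI (fun b ↦ restrictHom_injective M (hinter b))
    (Bool.forall_bool.2 ⟨h₂, h₁⟩) h₁₂

theorem mem_and_mem_of_isMatrixOf {Γ : SimpleGraph V} {M : CoxeterMatrix V} (hM : M.IsMatrixOf Γ)
    (hcover : S₁ ∪ S₂ = Set.univ)
    (hedges : ∀ v w, Γ.Adj v w → (v ∈ S₁ ∧ w ∈ S₁) ∨ (v ∈ S₂ ∧ w ∈ S₂)) (v w : V)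
    (hvw : M v w ≠ 0) : (v ∈ S₁ ∧ w ∈ S₁) ∨ (v ∈ S₂ ∧ w ∈ S₂) := by
  rcases eq_or_ne v w with rfl | hne
  · simpa using hcover.ge (Set.mem_univ v)
  · exact hedges v w (by_contra fun hadj ↦ hvw (hM.2 v w hne hadj))

end Amalgam

end CoxeterAmalgam

open CoxeterAmalgam in
theorem coxeterGroup_amalgam_decomposition_and_coherent_general
    {V : Type*} (M : CoxeterMatrix V) (S₁ S₂ : Set V)
    (hS : ∀ v w, M v w ≠ 0 → (v ∈ S₁ ∧ w ∈ S₁) ∨ (v ∈ S₂ ∧ w ∈ S₂)) :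
    (Function.Injective (M.restrictHom (Set.inter_subset_left (s := S₁) (t := S₂))) ∧
     Function.Injective (M.restrictHom (Set.inter_subset_right (s := S₁) (t := S₂))) ∧
     ∀ (Q : Type*) [Group Q]
       (k₁ : (M.restrict S₁).Group →* Q) (k₂ : (M.restrict S₂).Group →* Q),
       k₁.comp (M.restrictHom (Set.inter_subset_left (s := S₁) (t := S₂))) =
         k₂.comp (M.restrictHom (Set.inter_subset_right (s := S₁) (t := S₂))) →
       ∃! h : M.Group →* Q,
         h.comp (M.restrictIncl S₁) = k₁ ∧ h.comp (M.restrictIncl S₂) = k₂) ∧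
    (Group.Coherent (M.restrict S₁).Group → Group.Coherent (M.restrict S₂).Group →
     Group.Slender (M.restrict (S₁ ∩ S₂)).Group →
     Group.Coherent M.Group) :=
  ⟨⟨restrictHom_injective M _, restrictHom_injective M _,
    fun _ _ _ _ hk ↦ existsUnique_hom_comp_restrictIncl_eq M hS hk⟩,
    coherent_of_coherent_restrict M hS⟩

/-- Let `Γ` be a finite simplicial graph with edge labels in `{2,3,4,...}`
(recorded by the Coxeter matrix `M`), and let `Γ₁ = Γ.induce S₁`, `Γ₂ = Γ.induce S₂` be
induced subgraphs with `Γ = Γ₁ ∪ Γ₂` (every vertex and every edge of `Γ` lies in `Γ₁` or in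
`Γ₂`).  Then `C(Γ)`, via the canonical maps, is the amalgamated free product
`C(Γ₁) ∗_{C(Γ₁ ∩ Γ₂)} C(Γ₂)` (the canonical maps `C(Γ₁ ∩ Γ₂) → C(Γᵢ)` are injective and
`C(Γ)` is the pushout); consequently, if `C(Γ₁)` and `C(Γ₂)` are coherent and `C(Γ₁ ∩ Γ₂)` is
slender, then `C(Γ)` is coherent. -/
theorem coxeterGroup_amalgam_decomposition_and_coherent
    {V : Type} [Fintype V] (Γ : SimpleGraph V) (M : CoxeterMatrix V)
    (hM : M.IsMatrixOf Γ)
    (S₁ S₂ : Set V) (hcover : S₁ ∪ S₂ = Set.univ)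
    (hedges : ∀ v w : V, Γ.Adj v w → (v ∈ S₁ ∧ w ∈ S₁) ∨ (v ∈ S₂ ∧ w ∈ S₂)) :
    (Function.Injective (M.restrictHom (Set.inter_subset_left (s := S₁) (t := S₂))) ∧
     Function.Injective (M.restrictHom (Set.inter_subset_right (s := S₁) (t := S₂))) ∧
     ∀ (Q : Type) [Group Q]
       (k₁ : (M.restrict S₁).Group →* Q) (k₂ : (M.restrict S₂).Group →* Q),
       k₁.comp (M.restrictHom (Set.inter_subset_left (s := S₁) (t := S₂))) =
         k₂.comp (M.restrictHom (Set.inter_subset_right (s := S₁) (t := S₂))) →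
       ∃! h : M.Group →* Q,
         h.comp (M.restrictIncl S₁) = k₁ ∧ h.comp (M.restrictIncl S₂) = k₂) ∧
    (Group.Coherent (M.restrict S₁).Group → Group.Coherent (M.restrict S₂).Group →
     Group.Slender (M.restrict (S₁ ∩ S₂)).Group →
     Group.Coherent M.Group) :=
  coxeterGroup_amalgam_decomposition_and_coherent_general M S₁ S₂
    (CoxeterAmalgam.mem_and_mem_of_isMatrixOf hM hcover hedges)
end

section
/- Let Γ = (V,E) be a finite simplicial graph. If #V ≤ 5, then the right-angled Coxeter group C(Γ) is coherent. -/
/-- The Coxeter matrix of the right-angled Coxeter group of a simplicial graph `Γ`: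
the label of every edge is `2`, and non-adjacent distinct vertices get the label `0`
(that is, `∞`: no relation). -/
def SimpleGraph.coxeterMatrix {V : Type*} (Γ : SimpleGraph V) [DecidableEq V]
    [DecidableRel Γ.Adj] : CoxeterMatrix V where
  M v w := if v = w then 1 else if Γ.Adj v w then 2 else 0
  isSymm := Matrix.IsSymm.ext fun a b => by
    rcases eq_or_ne a b with h | h
    · simp [h]
    · simp [h, h.symm, Γ.adj_comm]
  diagonal v := by simp
  off_diagonal v w h := by simp only [if_neg h]; split <;> omega

/-- The right-angled Coxeter group
`C(Γ) = ⟨V ∣ v² = 1 for all v ∈ V, (vw)² = 1 for all {v,w} ∈ E⟩` of a simplicial graph `Γ`. -/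
def SimpleGraph.racg {V : Type*} (Γ : SimpleGraph V) [DecidableEq V]
    [DecidableRel Γ.Adj] : Type _ :=
  Γ.coxeterMatrix.Group

instance {V : Type*} (Γ : SimpleGraph V) [DecidableEq V] [DecidableRel Γ.Adj] :
    Group Γ.racg :=
  inferInstanceAs (Group Γ.coxeterMatrix.Group)

/-!
Let `v` be a vertex of `Γ` and `W` a set of other vertices. The subgroup generated by `W` and `v` is
an amalgamated product of the subgroup `A` generated by `W` and a group `C × ⟨v⟩`, where `C` is
generated by the neighbours of `v` in `W`. Killing `W` shows that it is a semidirect product of `A`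
with the free product of the groups of order two generated by the conjugates of `v`, which are
indexed by `A ⧸ C`; it acts on the Cayley tree of that free product with vertex stabilizers that
embed in `A` and edge stabilizers that embed in a conjugate of `C`.

By a theorem of Karrass and Solitar, a group acting on a tree with coherent vertex stabilizers and
slender edge stabilizers is coherent. To see it, let the acting group `H` be finitely generated, and
let `Q` be the abstract group generated by finitely many of the generators of the stabilizers of the
vertices of a connected transversal, subject to the finitely many relations that hold within these
stabilizers. Then `Q` maps onto `H`, and it acts on the tree through `H`; the development of its
system of stabilizers immerses in the tree, hence embeds in it, so `Q → H` is injective.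

The group `C` is slender as soon as every neighbour of `v` commutes with all but at most one of the
others, for it is then a direct product of groups of order two and infinite dihedral groups. A graph
on at most five vertices always has such a vertex `v`: otherwise some vertex has two
non-neighbours and three neighbours, which makes six vertices.
-/

namespace RACG

open Subgroup

section FinitePresentation

variable {G H P : Type*} [Group G] [Group H] [Group P]

lemma finitelyPresented_iff : Group.FinitelyPresented G ↔ Group.IsFinitelyPresented G := by
  constructor
  · rintro ⟨n, R, hR, ⟨e⟩⟩
    have : Finite R := hR
    exact Group.IsFinitelyPresented.equiv e
  · intro h
    obtain ⟨n, R, hR, ⟨e⟩⟩ := Group.IsFinitelyPresented.exists_mulEquiv_presentedGroup (G := G)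
    exact ⟨n, R, hR, ⟨e.symm⟩⟩

lemma ker_isFinitelyNormallyGenerated [Group.FG P] [Group.IsFinitelyPresented H] (f : P →* H)
    (hf : Function.Surjective f) : f.ker.IsFinitelyNormallyGenerated := by
  obtain ⟨n, φ, hφ, R, hR, hRφ⟩ := Group.IsFinitelyPresented.out (G := H)
  obtain ⟨S, hS, hSfin⟩ := Group.fg_iff.1 ‹Group.FG P›
  choose w hw using fun j => hf (φ (FreeGroup.of j))
  choose z hz using fun p => hφ (f p)
  let u : FreeGroup (Fin n) →* P := FreeGroup.lift w
  have hfu (x : FreeGroup (Fin n)) : f (u x) = φ x :=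
    DFunLike.congr_fun (FreeGroup.ext_hom (f.comp u) φ fun j => by simp [u, hw]) x
  let R' : Set P := u '' R ∪ (fun p => p⁻¹ * u (z p)) '' S
  let N : Subgroup P := normalClosure R'
  refine ⟨R', (hR.image u).union (hSfin.image _), le_antisymm ?_ ?_⟩
  · refine normalClosure_le_normal ?_
    rintro _ (⟨r, hr, rfl⟩ | ⟨p, -, rfl⟩)
    · have hr : r ∈ φ.ker := hRφ ▸ subset_normalClosure hr
      exact (hfu r).trans hr
    · simp [hfu, hz]
  have hu : φ.ker ≤ ((QuotientGroup.mk' N).comp u).ker := by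
    rw [← hRφ]
    refine normalClosure_le_normal fun r hr => ?_
    exact (QuotientGroup.eq_one_iff _).2 (subset_normalClosure (.inl ⟨r, hr, rfl⟩))
  -- Since `H` is presented by `R`, the lift `u` induces a left inverse `H → P ⧸ N` of `P ⧸ N → H`.
  let v : H →* P ⧸ N := φ.liftOfSurjective hφ ⟨(QuotientGroup.mk' N).comp u, hu⟩
  have hv (x : FreeGroup (Fin n)) : v (φ x) = u x :=
    φ.liftOfRightInverse_comp_apply _ _ ⟨(QuotientGroup.mk' N).comp u, hu⟩ x
  have hvf : v.comp f = QuotientGroup.mk' N := by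
    refine MonoidHom.eq_of_eqOn_dense hS fun p hp => ?_
    rw [MonoidHom.comp_apply, ← hz p, hv]
    exact (QuotientGroup.eq.2 (subset_normalClosure (.inr ⟨p, hp, rfl⟩))).symm
  intro k hk
  have hk : f k = 1 := hk
  rw [← QuotientGroup.eq_one_iff (N := N), ← QuotientGroup.mk'_apply, ← hvf, MonoidHom.comp_apply,
    hk, map_one]

lemma exists_finite_inf_ker_le_normalClosure (f : P →* H) {K : Subgroup P} (hK : K.FG)
    (hfK : Group.IsFinitelyPresented (K.map f)) :
    ∃ R : Set P, R.Finite ∧ R ⊆ f.ker ∧ K ⊓ f.ker ≤ normalClosure R := by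
  have : Group.FG K := (Group.fg_iff_subgroup_fg K).2 hK
  obtain ⟨R, hR, hRker⟩ :=
    ker_isFinitelyNormallyGenerated (f.subgroupMap K) (f.subgroupMap_surjective K)
  have mem_ker (k : K) : k ∈ (f.subgroupMap K).ker ↔ f k = 1 := Subtype.ext_iff
  refine ⟨K.subtype '' R, hR.image _, ?_, fun k ⟨hkK, hkf⟩ => ?_⟩
  · rintro _ ⟨r, hr, rfl⟩
    exact (mem_ker r).1 (hRker ▸ subset_normalClosure hr)
  · have hk : (⟨k, hkK⟩ : K) ∈ normalClosure R := hRker ▸ (mem_ker _).2 hkf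
    exact map_normalClosure_le R K.subtype (mem_map_of_mem K.subtype hk)

lemma fg_map {K : Subgroup G} (hK : K.FG) (f : G →* H) : (K.map f).FG := by
  rw [fg_iff_submonoid_fg] at hK ⊢
  exact hK.map f

lemma fg_of_map_injective {K : Subgroup G} {f : G →* H} (hf : Function.Injective f)
    (hK : (K.map f).FG) : K.FG := by
  rw [fg_iff_submonoid_fg] at hK ⊢
  exact hK.map_injective f hf

lemma exists_finite_subset_mem_closure {S : Set G} {g : G} (hg : g ∈ closure S) :
    ∃ S₀ ⊆ S, S₀.Finite ∧ g ∈ closure S₀ := by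
  induction hg using closure_induction with
  | mem x hx => exact ⟨{x}, by simpa, Set.finite_singleton x, by simp⟩
  | one => exact ⟨∅, by simp, Set.finite_empty, one_mem _⟩
  | mul x y _ _ hx hy =>
    obtain ⟨X, hXS, hX, hxX⟩ := hx
    obtain ⟨Y, hYS, hY, hyY⟩ := hy
    exact ⟨X ∪ Y, Set.union_subset hXS hYS, hX.union hY,
      mul_mem (closure_mono Set.subset_union_left hxX) (closure_mono Set.subset_union_right hyY)⟩
  | inv x _ hx =>
    obtain ⟨X, hXS, hX, hxX⟩ := hx
    exact ⟨X, hXS, hX, inv_mem hxX⟩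

lemma exists_finite_subset_le_closure {K : Subgroup G} (hK : K.FG) {S : Set G}
    (hKS : K ≤ closure S) : ∃ S₀ ⊆ S, S₀.Finite ∧ K ≤ closure S₀ := by
  obtain ⟨T, rfl, hT⟩ := K.fg_iff.1 hK
  choose! S₀ hS₀S hS₀ hxS₀ using
    fun x (hx : x ∈ T) => exists_finite_subset_mem_closure (hKS (subset_closure hx))
  refine ⟨⋃ x ∈ T, S₀ x, Set.iUnion₂_subset hS₀S, hT.biUnion hS₀, (closure_le _).2 fun x hx => ?_⟩
  exact closure_mono (Set.subset_biUnion_of_mem hx) (hxS₀ x hx)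

lemma coherent_of_injective {f : G →* H} (hf : Function.Injective f) (hH : Group.Coherent H) :
    Group.Coherent G := by
  intro K hK
  have := finitelyPresented_iff.1 (hH (K.map f) (fg_map hK f))
  exact finitelyPresented_iff.2 (.equiv (K.equivMapOfInjective f hf).symm)

lemma slender_of_injective {f : G →* H} (hf : Function.Injective f) (hH : Group.Slender H) :
    Group.Slender G := fun K => fg_of_map_injective hf (hH (K.map f))

end FinitePresentation

section Slender

variable {G : Type*} [Group G]

lemma slender_subgroup_iff {K : Subgroup G} : Group.Slender K ↔ ∀ H ≤ K, H.FG := by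
  refine ⟨fun hK H hH => ?_, fun hK H => ?_⟩
  · rw [← map_subgroupOf_eq_of_le hH]
    exact fg_map (hK (H.subgroupOf K)) K.subtype
  · exact fg_of_map_injective K.subtype_injective (hK _ (map_subtype_le H))

lemma slender_zpowers (g : G) : Group.Slender (zpowers g) := fun H => by
  obtain ⟨h, rfl⟩ := H.isCyclic_iff_exists_zpowers_eq_top.1 inferInstance
  exact (fg_iff _).2 ⟨{h}, (zpowers_eq_closure h).symm, Set.finite_singleton h⟩

lemma slender_sup {K N : Subgroup G} (hKN : K ≤ normalizer N) (hK : Group.Slender K)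
    (hN : Group.Slender N) : Group.Slender ↥(K ⊔ N) := by
  rw [slender_subgroup_iff] at *
  intro H hH
  obtain ⟨S, hS, hSfin⟩ := (fg_iff _).1 (hK (K ⊓ (H ⊔ N)) inf_le_left)
  obtain ⟨T, hT, hTfin⟩ := (fg_iff _).1 (hN (H ⊓ N) inf_le_right)
  have hHN : H ≤ normalizer N := hH.trans (sup_le hKN le_normalizer)
  have mem_sup_iff {L : Subgroup G} (hL : L ≤ normalizer N) {g : G} :
      g ∈ L ⊔ N ↔ ∃ l ∈ L, ∃ n ∈ N, l * n = g := by
    rw [← SetLike.mem_coe, coe_mul_of_left_le_normalizer_right L N hL, Set.mem_mul]; rfl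
  have exists_lift (s : G) (hs : s ∈ S) : ∃ h ∈ H, ∃ n ∈ N, h * n = s :=
    (mem_sup_iff hHN).1 (hS.le (subset_closure hs)).2
  choose! h hh n hn hhn using exists_lift
  have hh' : closure (h '' S) ≤ H := (closure_le _).2 (Set.image_subset_iff.2 hh)
  have hSN : closure S ≤ closure (h '' S) ⊔ N := (closure_le _).2 fun s hs => hhn s hs ▸
    mul_mem_sup (subset_closure (Set.mem_image_of_mem h hs)) (hn s hs)
  refine (fg_iff H).2 ⟨h '' S ∪ T, le_antisymm ?_ fun g hg => ?_, (hSfin.image h).union hTfin⟩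
  · rw [Subgroup.closure_union]
    exact sup_le hh' (hT.le.trans inf_le_left)
  · obtain ⟨k, hk, m, hm, rfl⟩ := (mem_sup_iff hKN).1 (hH hg)
    have hk' : k ∈ K ⊓ (H ⊔ N) :=
      ⟨hk, (mem_sup_iff hHN).2 ⟨k * m, hg, m⁻¹, inv_mem hm, by group⟩⟩
    obtain ⟨c, hc, m', hm', rfl⟩ := (mem_sup_iff (hh'.trans hHN)).1 (hSN (hS.ge hk'))
    rw [Subgroup.closure_union, hT, mul_assoc]
    rw [mul_assoc] at hg
    exact mul_mem_sup hc ⟨(mul_mem_cancel_left (hh' hc)).1 hg, mul_mem hm' hm⟩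

lemma slender_closure_pair_of_involutions {s t : G} (hs : s * s = 1) (ht : t * t = 1) :
    Group.Slender (closure {s, t}) := by
  have hs' : s⁻¹ = s := inv_eq_of_mul_eq_one_left hs
  have ht' : t⁻¹ = t := inv_eq_of_mul_eq_one_left ht
  have hclosure : closure {s, t} = zpowers s ⊔ zpowers (s * t) := by
    refine le_antisymm ((closure_le _).2 ?_) (sup_le ?_ ?_)
    · have hs₁ : s ∈ zpowers s ⊔ zpowers (s * t) := mem_sup_left (mem_zpowers s)
      refine Set.pair_subset hs₁ ?_
      simpa [← mul_assoc, hs] using mul_mem hs₁ (mem_sup_right (mem_zpowers (s * t)))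
    · exact zpowers_le.2 (subset_closure (by simp))
    · exact zpowers_le.2 (mul_mem (subset_closure (by simp)) (subset_closure (by simp)))
  have hnormal : s ∈ normalizer (zpowers (s * t) : Set G) := by
    have hconj : (zpowers (s * t)).map (MulAut.conj s).toMonoidHom ≤ zpowers (s * t) := by
      rw [MonoidHom.map_zpowers, zpowers_le]
      refine ⟨-1, ?_⟩
      simp [hs', ht', ← mul_assoc, hs]
    have hmem (g : G) (hg : g ∈ zpowers (s * t)) : s * g * s⁻¹ ∈ zpowers (s * t) :=
      hconj (mem_map_of_mem _ hg)
    refine mem_normalizer_iff.2 fun g => ⟨hmem g, fun hg => ?_⟩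
    simpa [mul_assoc, hs', hs, ← mul_assoc s s] using hmem _ hg
  rw [hclosure]
  exact slender_sup (zpowers_le.2 hnormal) (slender_zpowers s) (slender_zpowers _)

lemma slender_closure_of_involutions {S : Set G} (hS : S.Finite) (hinv : ∀ s ∈ S, s * s = 1)
    (hcomm : ∀ s ∈ S, {t ∈ S | ¬Commute s t}.Subsingleton) : Group.Slender (closure S) := by
  induction hn : S.ncard using Nat.strong_induction_on generalizing S with | _ n ih =>
  obtain rfl | ⟨s, hs⟩ := S.eq_empty_or_nonempty
  · rw [Subgroup.closure_empty, ← zpowers_one_eq_bot]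
    exact slender_zpowers 1
  let B : Set G := insert s {t ∈ S | ¬Commute s t}
  have hBS : B ⊆ S := Set.insert_subset hs (Set.sep_subset _ _)
  have hB : Group.Slender (closure B) := by
    obtain h | ⟨t, ht⟩ := (hcomm s hs).eq_empty_or_singleton
    · rw [show B = {s} by simp only [B, h, insert_empty_eq], ← zpowers_eq_closure]
      exact slender_zpowers s
    · rw [show B = {s, t} by simp only [B, ht]]
      exact slender_closure_pair_of_involutions (hinv s hs) (hinv t (ht.ge rfl).1)
  have hSB : Group.Slender (closure (S \ B)) := by
    refine ih _ ?_ hS.sdiff (fun t ht => hinv t ht.1) (fun t ht => ?_) rfl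
    · rw [← hn]
      exact Set.ncard_lt_ncard (sdiff_lt hBS (Set.insert_nonempty _ _).ne_empty) hS
    · exact (hcomm t ht.1).anti fun u hu => ⟨hu.1.1, hu.2⟩
  have hcentral : S \ B ⊆ centralizer B := by
    rintro t ⟨htS, htB⟩ b (rfl | ⟨hbS, hsb⟩)
    · by_contra h
      exact htB (.inr ⟨htS, h⟩)
    · by_contra h
      exact htB (.inl (hcomm b hbS ⟨htS, h⟩ ⟨hs, fun h => hsb h.symm⟩))
  have hnormal : closure (S \ B) ≤ normalizer (closure B : Set G) :=
    ((closure_le _).2 hcentral).trans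
      (centralizer_closure B ▸ centralizer_le_normalizer (closure B : Set G))
  have hclosure : closure S = closure (S \ B) ⊔ closure B := by
    rw [← Subgroup.closure_union, Set.sdiff_union_of_subset hBS]
  rw [hclosure]
  exact slender_sup hnormal hSB hB

end Slender

section Trees

variable {X Y : Type*} {G : SimpleGraph Y} {T : SimpleGraph X}

/-- An immersion of graphs: a homomorphism that is injective on the neighbours of each vertex. -/
def IsImmersion (f : G →g T) : Prop := ∀ y, Set.InjOn f (G.neighborSet y)

lemma IsImmersion.isPath_map {f : G →g T} (hf : IsImmersion f) (hT : T.IsAcyclic) {p q : Y}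
    {w : G.Walk p q} (hw : w.IsPath) : (w.map f).IsPath := by
  rw [hT.isPath_iff_isChain]
  induction w with
  | nil => simp
  | @cons u v _ h w ih =>
    cases w with
    | nil => simp
    | @cons _ x _ h' w =>
      rw [SimpleGraph.Walk.cons_isPath_iff] at hw
      refine List.isChain_cons_cons.2 ⟨fun heq => ?_, ih hw.1⟩
      have heq : s(f v, f u) = s(f v, f x) := Sym2.eq_swap.trans heq
      have hux : u = x := hf v h.symm h' (Sym2.congr_right.1 heq)
      exact hw.2 (by simp [hux])

lemma IsImmersion.eq_of_map_eq {f : G →g T} (hf : IsImmersion f) (hT : T.IsAcyclic) {p q : Y}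
    (hpq : G.Reachable p q) (h : f p = f q) : p = q := by
  obtain ⟨w, hw⟩ := hpq.exists_isPath
  exact ((SimpleGraph.Walk.nil_map_iff f).1 ((hf.isPath_map hT hw).nil_iff_eq.2 h)).eq

end Trees

section Stabilizers

variable {X Q : Type*} [Group Q] {T : SimpleGraph X} {F : Set X} {L : X → Subgroup Q} {D : Set Q}

/-- The vertices of the development of a system of candidate stabilizers: the left cosets of the
subgroups `L x`, for `x` in `F`. -/
abbrev DevelopmentVertex (F : Set X) (L : X → Subgroup Q) : Type _ := Σ x : F, Q ⧸ L x

/-- The coset `k L x` as a vertex of the development. -/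
def devMk (L : X → Subgroup Q) (x : F) (k : Q) : DevelopmentVertex F L := ⟨x, k⟩

lemma devMk_eq_iff {x : F} {k k' : Q} : devMk L x k = devMk L x k' ↔ k⁻¹ * k' ∈ L x := by
  rw [← QuotientGroup.eq]
  simp [devMk]

variable [MulAction Q X]

/-- The action of `Q` on the vertices of `T` is by graph automorphisms. -/
def ActsByAutomorphisms (Q : Type*) [Group Q] [MulAction Q X] (T : SimpleGraph X) : Prop :=
  ∀ (g : Q) (x y : X), T.Adj x y → T.Adj (g • x) (g • y)

/-- A connected partial transversal of an action on a graph: a set of vertices that spans a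
connected subgraph and meets every orbit at most once. -/
structure IsConnectedTransversal (Q : Type*) [Group Q] [MulAction Q X] (T : SimpleGraph X)
    (F : Set X) : Prop where
  connected : (T.induce F).Connected
  eq_of_smul_eq : ∀ x ∈ F, ∀ y ∈ F, ∀ g : Q, g • x = y → x = y

/-- Candidates `L x` for the stabilizers of the vertices `x` of `F`, with a set `D` of elements
carrying the edges between translates of `F`. The last field says that the candidates account for
every coincidence of two edges at a vertex of `F`. -/
structure IsLocalStabilizerSystem (T : SimpleGraph X) (F : Set X) (L : X → Subgroup Q)
    (D : Set Q) : Prop where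
  le_stabilizer : ∀ x ∈ F, L x ≤ MulAction.stabilizer Q x
  one_mem : 1 ∈ D
  inv_mem : ∀ t ∈ D, t⁻¹ ∈ D
  closure_eq_top : closure ((⋃ x ∈ F, (L x : Set Q)) ∪
    {t ∈ D | ∃ x ∈ F, ∃ y ∈ F, T.Adj x (t • y)}) = ⊤
  mem_of_smul_eq : ∀ x ∈ F, ∀ y ∈ F, ∀ s ∈ D, ∀ t ∈ D, ∀ l ∈ L x, T.Adj x (s • y) →
    l • s • y = t • y → t⁻¹ * l * s ∈ L y

namespace IsLocalStabilizerSystem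

variable (h : IsLocalStabilizerSystem T F L D)
include h

/-- The map sending the vertex `k L x` of the development to `k • x`. -/
def devMap (p : DevelopmentVertex F L) : X :=
  Quotient.liftOn' p.2 (fun k => k • (p.1 : X)) fun k k' hk => by
    have hk := h.le_stabilizer p.1 p.1.2 (QuotientGroup.leftRel_apply.1 hk)
    rw [MulAction.mem_stabilizer_iff, mul_smul, inv_smul_eq_iff] at hk
    exact hk.symm

lemma devMap_devMk (x : F) (k : Q) : h.devMap (devMk L x k) = k • (x : X) := rfl

/-- The development: `k L x` is joined to `k t L y` for `t` in `D` whenever `k • x` is adjacent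
to `k • t • y`. -/
def development : SimpleGraph (DevelopmentVertex F L) where
  Adj p q := T.Adj (h.devMap p) (h.devMap q) ∧
    ∃ x y k, ∃ t ∈ D, p = devMk L x k ∧ q = devMk L y (k * t)
  symm := ⟨fun p q ⟨hadj, x, y, k, t, ht, hp, hq⟩ =>
    ⟨hadj.symm, y, x, k * t, t⁻¹, h.inv_mem t ht, hq, by rw [hp, mul_inv_cancel_right]⟩⟩
  loopless := ⟨fun _ hp => hp.1.ne rfl⟩

/-- The projection of the development to the graph acted on. -/
def devHom : h.development →g T := ⟨h.devMap, fun hadj => hadj.1⟩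

lemma isImmersion_devHom (hF : IsConnectedTransversal Q T F)
    (hT : ActsByAutomorphisms Q T) : IsImmersion h.devHom := by
  rintro _ _ ⟨hadj, x, y, k, s, hs, rfl, rfl⟩ _ ⟨-, x', y', k', t, ht, hx', rfl⟩ heq
  obtain rfl : x = x' := congrArg Sigma.fst hx'
  rw [devMap_devMk, devMap_devMk, mul_smul] at hadj
  have hadj : T.Adj x (s • y) := by simpa only [inv_smul_smul] using hT k⁻¹ _ _ hadj
  have heq : (k * s) • (y : X) = (k' * t) • (y' : X) := heq
  obtain rfl : y = y' := Subtype.ext <| hF.eq_of_smul_eq y y.2 y' y'.2 ((k' * t)⁻¹ * (k * s)) (by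
    rw [mul_smul, heq, inv_smul_smul])
  refine (devMk_eq_iff.2 ?_).symm
  have hk : (k'⁻¹ * k) • s • (y : X) = t • (y : X) := by
    rw [mul_smul, ← mul_smul k, heq, mul_smul, inv_smul_smul]
  simpa only [mul_inv_rev, mul_assoc] using
    h.mem_of_smul_eq x x.2 y y.2 s hs t ht _ (devMk_eq_iff.1 hx'.symm) hadj hk

lemma development_adj (hT : ActsByAutomorphisms Q T) {x y : F} (k : Q) {t : Q} (ht : t ∈ D)
    (hxy : T.Adj x (t • y)) : h.development.Adj (devMk L x k) (devMk L y (k * t)) :=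
  ⟨by simpa only [devMap_devMk, mul_smul] using hT k _ _ hxy, x, y, k, t, ht, rfl, rfl⟩

lemma preconnected_development (hF : IsConnectedTransversal Q T F)
    (hT : ActsByAutomorphisms Q T) :
    h.development.Preconnected := by
  have reachable_devMk (x y : F) (k : Q) :
      h.development.Reachable (devMk L x k) (devMk L y k) :=
    (hF.connected x y).map ⟨fun x => devMk L x k, fun {x y} hxy => by
      simpa using h.development_adj hT k h.one_mem (by rwa [one_smul])⟩
  have reachable_mul (g : Q) : ∀ (k : Q) (x y : F),
      h.development.Reachable (devMk L x k) (devMk L y (k * g)) := by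
    have hg : g ∈ Subgroup.closure _ := h.closure_eq_top.ge (mem_top g)
    induction hg using closure_induction with
    | mem g hg =>
      intro k x y
      obtain hg | ⟨ht, z, hz, w, hw, hzw⟩ := hg
      · obtain ⟨z, hz, hgz⟩ := Set.mem_iUnion₂.1 hg
        have hk : devMk L ⟨z, hz⟩ k = devMk L ⟨z, hz⟩ (k * g) := devMk_eq_iff.2 (by simpa)
        exact (reachable_devMk x ⟨z, hz⟩ k).trans (hk ▸ reachable_devMk ⟨z, hz⟩ y (k * g))
      · have hadj := h.development_adj hT (x := ⟨z, hz⟩) (y := ⟨w, hw⟩) k ht hzw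
        exact (reachable_devMk x _ k).trans (hadj.reachable.trans (reachable_devMk _ y _))
    | one => simpa using fun k x y => reachable_devMk x y k
    | mul a b _ _ ha hb =>
      exact fun k x y => (ha k x x).trans (by simpa [mul_assoc] using hb (k * a) x y)
    | inv a _ ha => exact fun k x y => by simpa using (ha (k * a⁻¹) y x).symm
  rintro ⟨x, a⟩ ⟨y, b⟩
  induction a using QuotientGroup.induction_on with | _ a
  induction b using QuotientGroup.induction_on with | _ b
  exact mul_inv_cancel_left a b ▸ reachable_mul (a⁻¹ * b) a x y

lemma eq_stabilizer (hF : IsConnectedTransversal Q T F) (hacyclic : T.IsAcyclic)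
    (hT : ActsByAutomorphisms Q T) {x : X} (hx : x ∈ F) :
    L x = MulAction.stabilizer Q x := by
  refine le_antisymm (h.le_stabilizer x hx) fun g hg => ?_
  have hmk : devMk L ⟨x, hx⟩ 1 = devMk L ⟨x, hx⟩ g :=
    (h.isImmersion_devHom hF hT).eq_of_map_eq hacyclic (h.preconnected_development hF hT _ _)
      ((one_smul Q x).trans hg.symm)
  simpa using devMk_eq_iff.1 hmk

end IsLocalStabilizerSystem

end Stabilizers

section Transversals

variable {X H : Type*} [Group H] [MulAction H X] {T : SimpleGraph X} {F F' : Set X}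

/-- The elements of `H` that map some vertex of `F` into `F` or to a neighbour of `F`. -/
def localGenerators (H : Type*) [Group H] [MulAction H X] (T : SimpleGraph X) (F : Set X) :
    Set H :=
  {h | ∃ x ∈ F, ∃ y ∈ F, h • y = x ∨ T.Adj x (h • y)}

/-- The translates of `F` under the subgroup generated by its local generators. -/
def localTranslates (H : Type*) [Group H] [MulAction H X] (T : SimpleGraph X) (F : Set X) :
    Set X :=
  {x | ∃ g ∈ closure (localGenerators H T F), ∃ y ∈ F, g • y = x}

lemma localGenerators_mono (hF : F ⊆ F') : localGenerators H T F ⊆ localGenerators H T F' :=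
  fun _ ⟨x, hx, y, hy, h⟩ => ⟨x, hF hx, y, hF hy, h⟩

lemma localTranslates_mono (hF : F ⊆ F') : localTranslates H T F ⊆ localTranslates H T F' :=
  fun _ ⟨g, hg, y, hy, h⟩ => ⟨g, closure_mono (localGenerators_mono hF) hg, y, hF hy, h⟩

lemma isConnectedTransversal_singleton (x : X) : IsConnectedTransversal H T {x} where
  connected := .of_subsingleton
  eq_of_smul_eq := by
    rintro _ rfl _ rfl _ _
    rfl

lemma IsConnectedTransversal.insert (hF : IsConnectedTransversal H T F) {x y : X} (hx : x ∈ F)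
    (hxy : T.Adj x y) (hy : ∀ z ∈ F, ∀ g : H, g • z ≠ y) :
    IsConnectedTransversal H T (insert y F) where
  connected := by
    rw [Set.insert_eq]
    exact SimpleGraph.connected_induce_union .of_subsingleton hF.connected.preconnected
      (Set.mem_singleton y) hx hxy.symm
  eq_of_smul_eq := by
    rintro z (rfl | hz) w (rfl | hw) g hg
    · rfl
    · exact (hy w hw g⁻¹ (by rw [← hg, inv_smul_smul])).elim
    · exact (hy z hz g hg).elim
    · exact hF.eq_of_smul_eq z hz w hw g hg

lemma exists_finite_transversal_adj (hT : ActsByAutomorphisms H T) (hFfin : F.Finite)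
    (hF : IsConnectedTransversal H T F) {u v : X} (huv : T.Adj u v)
    (hu : u ∈ localTranslates H T F) :
    ∃ F' ⊇ F, F'.Finite ∧ IsConnectedTransversal H T F' ∧ v ∈ localTranslates H T F' := by
  obtain ⟨g, hg, y, hy, rfl⟩ := hu
  have hadj : T.Adj y (g⁻¹ • v) := by simpa only [inv_smul_smul] using hT g⁻¹ _ _ huv
  by_cases hv : ∃ z ∈ F, ∃ h : H, h • z = g⁻¹ • v
  · obtain ⟨z, hz, h, hzv⟩ := hv
    refine ⟨F, subset_rfl, hFfin, hF, g * h, ?_, z, hz, by rw [mul_smul, hzv, smul_inv_smul]⟩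
    exact mul_mem hg (subset_closure ⟨y, hy, z, hz, .inr (hzv ▸ hadj)⟩)
  · push Not at hv
    have hmono : F ⊆ insert (g⁻¹ • v) F := Set.subset_insert _ _
    exact ⟨_, hmono, hFfin.insert _, hF.insert hy hadj hv, g,
      closure_mono (localGenerators_mono hmono) hg, _, Set.mem_insert _ _, smul_inv_smul g v⟩

lemma exists_finite_transversal_walk (hT : ActsByAutomorphisms H T) {u v : X} (w : T.Walk u v)
    (hFfin : F.Finite) (hF : IsConnectedTransversal H T F) (hu : u ∈ localTranslates H T F) :
    ∃ F' ⊇ F, F'.Finite ∧ IsConnectedTransversal H T F' ∧ v ∈ localTranslates H T F' := by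
  induction w generalizing F with
  | nil => exact ⟨F, subset_rfl, hFfin, hF, hu⟩
  | cons huv _ ih =>
    obtain ⟨F₁, hFF₁, hF₁fin, hF₁, hv⟩ := exists_finite_transversal_adj hT hFfin hF huv hu
    obtain ⟨F₂, hF₁F₂, hF₂⟩ := ih hF₁fin hF₁ hv
    exact ⟨F₂, hFF₁.trans hF₁F₂, hF₂⟩

lemma exists_finite_transversal_of_finite (hT : ActsByAutomorphisms H T) (hconn : T.Connected)
    (x : X) {S : Set X} (hS : S.Finite) :
    ∃ F, F.Finite ∧ IsConnectedTransversal H T F ∧ x ∈ F ∧ S ⊆ localTranslates H T F := by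
  induction S, hS using Set.Finite.induction_on with
  | empty =>
    exact ⟨{x}, Set.finite_singleton x, isConnectedTransversal_singleton x, rfl, by simp⟩
  | @insert y S _ _ ih =>
    obtain ⟨F, hFfin, hF, hx, hS⟩ := ih
    obtain ⟨w⟩ := hconn x y
    obtain ⟨F', hFF', hF'fin, hF', hy⟩ :=
      exists_finite_transversal_walk hT w hFfin hF ⟨1, one_mem _, x, hx, one_smul H x⟩
    exact ⟨F', hF'fin, hF', hFF' hx, Set.insert_subset hy (hS.trans (localTranslates_mono hFF'))⟩

lemma exists_finite_transversal_closure_localGenerators [Group.FG H] (hT : ActsByAutomorphisms H T)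
    (hconn : T.Connected) : ∃ F : Set X, F.Finite ∧ IsConnectedTransversal H T F ∧
      closure (localGenerators H T F) = ⊤ := by
  obtain ⟨S, hS, hSfin⟩ := Group.fg_iff.1 ‹Group.FG H›
  obtain ⟨x⟩ := hconn.nonempty
  obtain ⟨F, hFfin, hF, hx, hSF⟩ :=
    exists_finite_transversal_of_finite hT hconn x (hSfin.image (· • x))
  refine ⟨F, hFfin, hF, top_unique (hS ▸ (closure_le _).2 fun s hs => ?_)⟩
  obtain ⟨g, hg, y, hy, hgy⟩ := hSF (Set.mem_image_of_mem _ hs)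
  have hgs : (g⁻¹ * s) • x = y := by rw [mul_smul, inv_smul_eq_iff, hgy]
  have hmem : g⁻¹ * s ∈ closure (localGenerators H T F) :=
    subset_closure ⟨y, hy, x, hx, .inl hgs⟩
  simpa using mul_mem hg hmem

end Transversals

section Approximation

variable {G H Q X : Type*} [Group G] [Group H] [Group Q]

/-- A group `Q` mapping to `H` by `π`, together with a lift `σ` of a generating set `S` of `H`, that
approximates `H` with respect to `S`: the relations `a * b = c * d` between elements of `S` and
the finitely presented subgroups generated by subsets of `S` lift to `Q`. The values of `σ`
outside `S` are irrelevant. -/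
structure IsApproximation (S : Set H) (π : Q →* H) (σ : H → Q) : Prop where
  map_lift : ∀ s ∈ S, π (σ s) = s
  closure_image_eq_top : closure (σ '' S) = ⊤
  lift_mul_eq : ∀ a ∈ S, ∀ b ∈ S, ∀ c ∈ S, ∀ d ∈ S, a * b = c * d → σ a * σ b = σ c * σ d
  injOn : ∀ A ⊆ S, Group.IsFinitelyPresented (closure A) → Set.InjOn π (closure (σ '' A))

lemma isApproximation_mk' {S : Set H} {f : G →* H} {w : H → G} (hfw : ∀ s ∈ S, f (w s) = s)
    (hw : closure (w '' S) = ⊤) {N : Subgroup G} [N.Normal] (hN : N ≤ f.ker)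
    (hmul : ∀ a ∈ S, ∀ b ∈ S, ∀ c ∈ S, ∀ d ∈ S, a * b = c * d → (w a * w b)⁻¹ * (w c * w d) ∈ N)
    (hfp : ∀ A ⊆ S, Group.IsFinitelyPresented (closure A) → closure (w '' A) ⊓ f.ker ≤ N) :
    IsApproximation S (QuotientGroup.lift N f hN) (QuotientGroup.mk' N ∘ w) where
  map_lift := hfw
  closure_image_eq_top := by
    rw [Set.image_comp, ← MonoidHom.map_closure, hw]
    exact map_top_of_surjective _ (QuotientGroup.mk'_surjective N)
  lift_mul_eq a ha b hb c hc d hd h := QuotientGroup.eq.2 (hmul a ha b hb c hc d hd h)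
  injOn A hA hAfp := by
    rw [Set.image_comp, ← MonoidHom.map_closure]
    rintro _ ⟨x, hx, rfl⟩ _ ⟨y, hy, rfl⟩ hxy
    exact QuotientGroup.eq.2
      (hfp A hA hAfp ⟨Subgroup.mul_mem _ (inv_mem hx) hy, f.eq_iff.1 hxy.symm⟩)

lemma map_closure_image_of_section {S A : Set H} {f : G →* H} {w : H → G}
    (hfw : ∀ s ∈ S, f (w s) = s) (hA : A ⊆ S) : (closure (w '' A)).map f = closure A := by
  rw [MonoidHom.map_closure, Set.image_image, Set.image_congr fun s hs => hfw s (hA hs),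
    Set.image_id']

lemma exists_isApproximation_quotient [Group.IsFinitelyPresented G] {S : Set H} (hS : S.Finite)
    {f : G →* H} {w : H → G} (hfw : ∀ s ∈ S, f (w s) = s) (hw : closure (w '' S) = ⊤) :
    ∃ (N : Subgroup G) (_ : N.Normal) (hN : N ≤ f.ker), Group.IsFinitelyPresented (G ⧸ N) ∧
      IsApproximation S (QuotientGroup.lift N f hN) (QuotientGroup.mk' N ∘ w) := by
  let 𝒜 : Set (Set H) := {A | A ⊆ S ∧ Group.IsFinitelyPresented (closure A)}
  have exists_relators (A : Set H) (hA : A ∈ 𝒜) :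
      ∃ R : Set G, R.Finite ∧ R ⊆ f.ker ∧ closure (w '' A) ⊓ f.ker ≤ normalClosure R :=
    exists_finite_inf_ker_le_normalClosure f
      ((fg_iff _).2 ⟨_, rfl, (hS.subset hA.1).image w⟩)
      (by rw [map_closure_image_of_section hfw hA.1]; exact hA.2)
  choose! R hRfin hRker hR using exists_relators
  let R₀ : Set G :=
    (fun p : H × H × H × H => (w p.1 * w p.2.1)⁻¹ * (w p.2.2.1 * w p.2.2.2)) ''
      {p ∈ S ×ˢ S ×ˢ S ×ˢ S | p.1 * p.2.1 = p.2.2.1 * p.2.2.2}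
  let R₁ : Set G := R₀ ∪ ⋃ A ∈ 𝒜, R A
  have hR₁fin : R₁.Finite :=
    (((hS.prod (hS.prod (hS.prod hS))).subset (Set.sep_subset _ _)).image _).union
      ((hS.finite_subsets.subset fun A hA => hA.1).biUnion hRfin)
  have hR₁ker : normalClosure R₁ ≤ f.ker := by
    refine normalClosure_le_normal (Set.union_subset ?_ (Set.iUnion₂_subset hRker))
    rintro _ ⟨⟨a, b, c, d⟩, ⟨⟨ha, hb, hc, hd⟩, habcd⟩, rfl⟩
    refine f.eq_iff.1 ?_
    simpa only [map_mul, hfw _ ha, hfw _ hb, hfw _ hc, hfw _ hd] using habcd.symm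
  refine ⟨normalClosure R₁, inferInstance, hR₁ker, .quotient _ ⟨R₁, hR₁fin, rfl⟩,
    isApproximation_mk' hfw hw hR₁ker ?_ ?_⟩
  · exact fun a ha b hb c hc d hd h =>
      subset_normalClosure (.inl ⟨(a, b, c, d), ⟨⟨ha, hb, hc, hd⟩, h⟩, rfl⟩)
  · exact fun A hA hAfp => (hR A ⟨hA, hAfp⟩).trans <| normalClosure_mono <|
      Set.subset_union_of_subset_right
        (Set.subset_biUnion_of_mem (u := R) (show A ∈ 𝒜 from ⟨hA, hAfp⟩)) _

universe u in
lemma exists_isApproximation {H : Type u} [Group H] {S : Set H} (hS : S.Finite) :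
    ∃ (Q : Type u) (_ : Group Q) (π : Q →* H) (σ : H → Q),
      Group.IsFinitelyPresented Q ∧ IsApproximation S π σ := by
  have : Finite S := hS
  let w : H → FreeGroup S := Function.extend Subtype.val FreeGroup.of 1
  have w_coe (s : S) : w s = FreeGroup.of s := Subtype.val_injective.extend_apply _ _ s
  have hfw (s : H) (hs : s ∈ S) : FreeGroup.lift ((↑) : S → H) (w s) = s := by
    rw [w_coe ⟨s, hs⟩]
    exact FreeGroup.lift_apply_of
  have hw : closure (w '' S) = ⊤ := by
    rw [Set.image_eq_range, funext w_coe]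
    exact FreeGroup.closure_range_of S
  obtain ⟨N, _, hN, hfp, h⟩ := exists_isApproximation_quotient hS hfw hw
  exact ⟨_, inferInstance, _, _, hfp, h⟩

namespace IsApproximation

variable {S : Set H} {π : Q →* H} {σ : H → Q} (h : IsApproximation S π σ)
include h

lemma lift_one (h₁ : 1 ∈ S) : σ 1 = 1 :=
  h.injOn {1} (Set.singleton_subset_iff.2 h₁) (by rw [closure_singleton_one]; infer_instance)
    (subset_closure ⟨1, rfl, rfl⟩) (one_mem _) (by rw [h.map_lift 1 h₁, map_one])

lemma lift_inv (h₁ : 1 ∈ S) {g : H} (hg : g ∈ S) (hg' : g⁻¹ ∈ S) : σ g⁻¹ = (σ g)⁻¹ := by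
  refine eq_inv_of_mul_eq_one_right ?_
  rw [h.lift_mul_eq g hg g⁻¹ hg' 1 h₁ 1 h₁ (by simp), h.lift_one h₁, one_mul]

end IsApproximation

end Approximation

section KarrassSolitar

variable {X H : Type*} [Group H] [MulAction H X] {T : SimpleGraph X} {F : Set X} {E S : Set H}

/-- The elements `m` of `S` that fix `x` and map `g • y` to `g' • y`, and for which the element
`g'⁻¹ * m * g` fixing `y` is also in `S`. -/
def edgeTransporters (S : Set H) (x y : X) (g g' : H) : Set H :=
  {m ∈ S | m • x = x ∧ m • g • y = g' • y ∧ g'⁻¹ * m * g ∈ S}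

/-- A finite generating set `S` adapted to a finite set `F` of vertices. The elements of `E` carry
the edges between translates of `F`, and `S` sees every element that fixes a vertex `x` of `F` and
moves an edge `x — g • y` with `g` in `E` to another such edge. -/
structure IsLocalGeneratingSet (T : SimpleGraph X) (F : Set X) (E S : Set H) : Prop where
  finite : S.Finite
  closure_eq_top : closure S = ⊤
  subset : E ⊆ S
  one_mem : 1 ∈ E
  inv_mem : ∀ g ∈ E, g⁻¹ ∈ E
  fixes_or_edge : ∀ s ∈ S, (∃ x ∈ F, s • x = x) ∨ s ∈ E ∧ ∃ x ∈ F, ∃ y ∈ F, T.Adj x (s • y)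
  exists_transporter : ∀ x ∈ F, ∀ y ∈ F, ∀ g ∈ E, ∀ g' ∈ E, T.Adj x (g • y) →
    ∀ h : H, h • x = x → h • g • y = g' • y →
      ∃ m ∈ edgeTransporters S x y g g', m⁻¹ * h ∈ closure (edgeTransporters S x y g g)

lemma exists_finite_edgeTransporters {x y : X} {g : H}
    (hfg : (MulAction.stabilizer H x ⊓ MulAction.stabilizer H (g • y)).FG) (g' : H) :
    ∃ B : Set H, B.Finite ∧ (∀ b ∈ B, b • x = x ∨ b • y = y) ∧ ∀ S ⊇ B, ∀ h : H, h • x = x →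
      h • g • y = g' • y →
        ∃ m ∈ edgeTransporters S x y g g', m⁻¹ * h ∈ closure (edgeTransporters S x y g g) := by
  by_cases hm : ∃ m : H, m • x = x ∧ m • g • y = g' • y
  swap
  · exact ⟨∅, Set.finite_empty, by simp, fun S _ h hx hy => (hm ⟨h, hx, hy⟩).elim⟩
  obtain ⟨m, hmx, hmy⟩ := hm
  obtain ⟨M, hM, hMfin⟩ := (fg_iff _).1 hfg
  have hMfix (c : H) (hc : c ∈ M) : c • x = x ∧ c • g • y = g • y := hM.le (subset_closure hc)
  have conj_smul {c k : H} (hc : c • g • y = k • y) : (k⁻¹ * c * g) • y = y := by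
    rw [mul_smul, mul_smul, hc, inv_smul_smul]
  refine ⟨{m, g'⁻¹ * m * g} ∪ (M ∪ (fun c => g⁻¹ * c * g) '' M),
    (Set.toFinite _).union (hMfin.union (hMfin.image _)), ?_, fun S hBS h hx hy => ?_⟩
  · rintro _ ((rfl | rfl) | hc | ⟨c, hc, rfl⟩)
    exacts [.inl hmx, .inr (conj_smul hmy), .inl (hMfix _ hc).1, .inr (conj_smul (hMfix c hc).2)]
  · refine ⟨m, ⟨hBS (by simp), hmx, hmy, hBS (by simp)⟩, ?_⟩
    have hmem : m⁻¹ * h ∈ closure M := by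
      rw [hM]
      exact ⟨by simp [mul_smul, hx, inv_smul_eq_iff, hmx],
        by simp [mul_smul, hy, inv_smul_eq_iff, hmy]⟩
    refine closure_mono (fun c hc => ?_) hmem
    exact ⟨hBS (.inr (.inl hc)), (hMfix c hc).1, (hMfix c hc).2,
      hBS (.inr (.inr (Set.mem_image_of_mem _ hc)))⟩

lemma IsConnectedTransversal.fixes_or_edge (hT : ActsByAutomorphisms H T)
    (hF : IsConnectedTransversal H T F) {g : H}
    (hg : g ∈ localGenerators H T F ∨ g⁻¹ ∈ localGenerators H T F) :
    (∃ x ∈ F, g • x = x) ∨ ∃ x ∈ F, ∃ y ∈ F, T.Adj x (g • y) := by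
  obtain ⟨x, hx, y, hy, h | h⟩ | ⟨x, hx, y, hy, h | h⟩ := hg
  · obtain rfl := hF.eq_of_smul_eq y hy x hx g h
    exact .inl ⟨y, hy, h⟩
  · exact .inr ⟨x, hx, y, hy, h⟩
  · obtain rfl := hF.eq_of_smul_eq y hy x hx _ h
    exact .inl ⟨y, hy, (inv_smul_eq_iff.1 h).symm⟩
  · exact .inr ⟨y, hy, x, hx, by simpa using hT g _ _ h.symm⟩

lemma exists_finite_symmetric_localGenerators [Group.FG H]
    (hF : closure (localGenerators H T F) = ⊤) :
    ∃ E : Set H, E.Finite ∧ closure E = ⊤ ∧ 1 ∈ E ∧ (∀ g ∈ E, g⁻¹ ∈ E) ∧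
      ∀ g ∈ E, g = 1 ∨ g ∈ localGenerators H T F ∨ g⁻¹ ∈ localGenerators H T F := by
  obtain ⟨E₀, hE₀, hE₀fin, htop⟩ :=
    exists_finite_subset_le_closure (Group.fg_def.1 ‹Group.FG H›) hF.ge
  refine ⟨insert 1 (E₀ ∪ E₀⁻¹), (hE₀fin.union hE₀fin.inv).insert 1,
    top_unique (htop.trans (closure_mono ?_)), Set.mem_insert _ _, ?_, ?_⟩
  · exact Set.subset_union_left.trans (Set.subset_insert _ _)
  · rintro g (rfl | hg | hg)
    exacts [.inl inv_one, .inr (.inr (Set.inv_mem_inv.2 hg)), .inr (.inl hg)]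
  · rintro g (rfl | hg | hg)
    exacts [.inl rfl, .inr (.inl (hE₀ hg)), .inr (.inr (hE₀ hg))]

lemma exists_isLocalGeneratingSet [Group.FG H] (hT : ActsByAutomorphisms H T)
    (hFfin : F.Finite) (hF : IsConnectedTransversal H T F)
    (htop : closure (localGenerators H T F) = ⊤)
    (hedge : ∀ x y, T.Adj x y → (MulAction.stabilizer H x ⊓ MulAction.stabilizer H y).FG) :
    ∃ E S : Set H, IsLocalGeneratingSet T F E S := by
  obtain ⟨E, hEfin, hEtop, h₁, hinv, hE⟩ := exists_finite_symmetric_localGenerators htop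
  obtain ⟨z, hz⟩ := hF.connected.nonempty
  choose! B hBfin hBfix hB using fun (x y : X) (g : H) (hxy : T.Adj x (g • y)) =>
    exists_finite_edgeTransporters (hedge x (g • y) hxy)
  let I : Set (X × X × H × H) := {p ∈ F ×ˢ F ×ˢ E ×ˢ E | T.Adj p.1 (p.2.2.1 • p.2.1)}
  let S : Set H := E ∪ ⋃ p ∈ I, B p.1 p.2.1 p.2.2.1 p.2.2.2
  have hI : I.Finite :=
    (hFfin.prod (hFfin.prod (hEfin.prod hEfin))).subset (Set.sep_subset _ _)
  refine ⟨E, S, hEfin.union (hI.biUnion fun p hp => hBfin _ _ _ hp.2 _),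
    top_unique (hEtop.ge.trans (closure_mono Set.subset_union_left)), Set.subset_union_left,
    h₁, hinv, ?_, fun x hx y hy g hg g' hg' hxy h => ?_⟩
  · rintro s (hs | hs)
    · obtain rfl | hs' := hE s hs
      · exact .inl ⟨z, hz, one_smul H z⟩
      · exact (hF.fixes_or_edge hT hs').imp_right fun h => ⟨hs, h⟩
    · obtain ⟨⟨x, y, g, g'⟩, ⟨⟨hx, hy, -⟩, hxy⟩, hs⟩ := Set.mem_iUnion₂.1 hs
      exact .inl ((hBfix x y g hxy g' s hs).elim (⟨x, hx, ·⟩) (⟨y, hy, ·⟩))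
  · refine hB x y g hxy g' S (Set.subset_union_of_subset_right ?_ _) h
    exact Set.subset_biUnion_of_mem (u := fun p : X × X × H × H => B p.1 p.2.1 p.2.2.1 p.2.2.2)
      (show (x, y, g, g') ∈ I from ⟨⟨hx, hy, hg, hg'⟩, hxy⟩)

variable {Q : Type*} [Group Q] {π : Q →* H} {σ : H → Q}

lemma IsApproximation.exists_conj_mem (h : IsApproximation S π σ) {x y : X} {g : H} (hg : g ∈ S)
    {c : H} (hc : c ∈ closure (edgeTransporters S x y g g)) :
    ∃ c' ∈ closure (σ '' {s ∈ S | s • x = x}), π c' = c ∧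
      (σ g)⁻¹ * c' * σ g ∈ closure (σ '' {s ∈ S | s • y = y}) := by
  let K : Subgroup Q := closure (σ '' {s ∈ S | s • x = x}) ⊓
    (closure (σ '' {s ∈ S | s • y = y})).comap (MulAut.conj (σ g)⁻¹).toMonoidHom
  suffices closure (edgeTransporters S x y g g) ≤ K.map π by
    obtain ⟨c', ⟨hc'x, hc'y⟩, rfl⟩ := this hc
    exact ⟨c', hc'x, rfl, by simpa using hc'y⟩
  rw [closure_le]
  rintro s ⟨hsS, hsx, hsy, hs'S⟩
  refine ⟨σ s, ⟨subset_closure ⟨s, ⟨hsS, hsx⟩, rfl⟩, subset_closure ⟨g⁻¹ * s * g, ⟨hs'S, ?_⟩, ?_⟩⟩,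
    h.map_lift s hsS⟩
  · rw [mul_smul, mul_smul, hsy, inv_smul_smul]
  · have := h.lift_mul_eq g hg _ hs'S s hsS g hg (by group)
    simp [mul_assoc, ← this]

variable [MulAction Q X]

lemma IsApproximation.closure_le_stabilizer (h : IsApproximation S π σ)
    (hπ : ∀ (q : Q) (x : X), q • x = π q • x) (x : X) :
    closure (σ '' {s ∈ S | s • x = x}) ≤ MulAction.stabilizer Q x := by
  rw [closure_le]
  rintro _ ⟨s, ⟨hs, hsx⟩, rfl⟩
  rw [SetLike.mem_coe, MulAction.mem_stabilizer_iff, hπ, h.map_lift s hs, hsx]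

lemma IsApproximation.conj_mem_of_smul_eq (h : IsApproximation S π σ)
    (hπ : ∀ (q : Q) (x : X), q • x = π q • x) (hES : IsLocalGeneratingSet T F E S) {x y : X}
    (hx : x ∈ F) (hy : y ∈ F) (hfp : Group.IsFinitelyPresented (closure {s ∈ S | s • x = x}))
    {g g' : H} (hg : g ∈ E) (hg' : g' ∈ E) (hxy : T.Adj x (g • y)) {l : Q}
    (hl : l ∈ closure (σ '' {s ∈ S | s • x = x})) (hly : l • σ g • y = σ g' • y) :
    (σ g')⁻¹ * l * σ g ∈ closure (σ '' {s ∈ S | s • y = y}) := by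
  have hgS := hES.subset hg
  have hg'S := hES.subset hg'
  simp only [hπ, h.map_lift g hgS, h.map_lift g' hg'S] at hly
  have hlx : π l • x = x := hπ l x ▸ h.closure_le_stabilizer hπ x hl
  obtain ⟨m, ⟨hmS, hmx, hmy, hm'S⟩, hc⟩ :=
    hES.exists_transporter x hx y hy g hg g' hg' hxy (π l) hlx hly
  obtain ⟨c, hcx, hπc, hcy⟩ := h.exists_conj_mem hgS hc
  have hσm : σ m ∈ closure (σ '' {s ∈ S | s • x = x}) := subset_closure ⟨m, ⟨hmS, hmx⟩, rfl⟩
  have hσm' : σ (g'⁻¹ * m * g) ∈ closure (σ '' {s ∈ S | s • y = y}) :=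
    subset_closure ⟨_, ⟨hm'S, by rw [mul_smul, mul_smul, hmy, inv_smul_smul]⟩, rfl⟩
  have hlmc : l = σ m * c :=
    h.injOn _ (Set.sep_subset _ _) hfp hl (mul_mem hσm hcx)
      (by rw [map_mul, h.map_lift m hmS, hπc, mul_inv_cancel_left])
  have hmg : σ g' * σ (g'⁻¹ * m * g) = σ m * σ g :=
    h.lift_mul_eq g' hg'S _ hm'S m hmS g hgS (by group)
  have hprod : (σ g')⁻¹ * l * σ g = σ (g'⁻¹ * m * g) * ((σ g)⁻¹ * c * σ g) := by
    rw [hlmc, mul_assoc _ (σ m * c), inv_mul_eq_iff_eq_mul, ← mul_assoc (σ g'), hmg]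
    group
  exact hprod ▸ mul_mem hσm' hcy

lemma IsApproximation.isLocalStabilizerSystem (h : IsApproximation S π σ)
    (hπ : ∀ (q : Q) (x : X), q • x = π q • x) (hES : IsLocalGeneratingSet T F E S)
    (hfp : ∀ x ∈ F, Group.IsFinitelyPresented (closure {s ∈ S | s • x = x})) :
    IsLocalStabilizerSystem T F (fun x => closure (σ '' {s ∈ S | s • x = x})) (σ '' E) where
  le_stabilizer x _ := h.closure_le_stabilizer hπ x
  one_mem := ⟨1, hES.one_mem, h.lift_one (hES.subset hES.one_mem)⟩
  inv_mem := by
    rintro _ ⟨g, hg, rfl⟩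
    exact ⟨g⁻¹, hES.inv_mem g hg, h.lift_inv (hES.subset hES.one_mem) (hES.subset hg)
      (hES.subset (hES.inv_mem g hg))⟩
  closure_eq_top := by
    refine top_unique (h.closure_image_eq_top.ge.trans (closure_mono ?_))
    rintro _ ⟨s, hs, rfl⟩
    obtain ⟨x, hx, hsx⟩ | ⟨hsE, x, hx, y, hy, hxy⟩ := hES.fixes_or_edge s hs
    · exact .inl (Set.mem_biUnion hx (subset_closure ⟨s, ⟨hs, hsx⟩, rfl⟩))
    · exact .inr ⟨⟨s, hsE, rfl⟩, x, hx, y, hy, by rwa [hπ, h.map_lift s hs]⟩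
  mem_of_smul_eq := by
    rintro x hx y hy _ ⟨g, hg, rfl⟩ _ ⟨g', hg', rfl⟩ l hl hxy hly
    rw [hπ, h.map_lift g (hES.subset hg)] at hxy
    exact h.conj_mem_of_smul_eq hπ hES hx hy (hfp x hx) hg hg' hxy hl hly

end KarrassSolitar

section ActionsOnTrees

variable {X G H : Type*} [Group G] [MulAction G X] [Group H] [MulAction H X] {T : SimpleGraph X}

lemma isFinitelyPresented_of_coherent {K L : Subgroup G} (hK : Group.Coherent K) (hLK : L ≤ K)
    (hL : L.FG) : Group.IsFinitelyPresented L := by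
  have hmap := map_subgroupOf_eq_of_le hLK
  have hfp := hK (L.subgroupOf K) (fg_of_map_injective K.subtype_injective (by
    simpa only [hmap] using hL))
  have := finitelyPresented_iff.1 hfp
  exact .equiv (subgroupOfEquivOfLe hLK)

/-- A theorem of Karrass and Solitar on the subgroups of amalgamated products. -/
lemma isFinitelyPresented_of_action_on_tree [Group.FG H] (hT : T.IsTree)
    (hact : ActsByAutomorphisms H T)
    (hvertex : ∀ x : X, Group.Coherent (MulAction.stabilizer H x))
    (hedge : ∀ x y : X, T.Adj x y → (MulAction.stabilizer H x ⊓ MulAction.stabilizer H y).FG) :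
    Group.IsFinitelyPresented H := by
  obtain ⟨F, hFfin, hF, htop⟩ :=
    exists_finite_transversal_closure_localGenerators hact hT.connected
  obtain ⟨E, S, hES⟩ := exists_isLocalGeneratingSet hact hFfin hF htop hedge
  have hfp (x : X) (_ : x ∈ F) : Group.IsFinitelyPresented (closure {s ∈ S | s • x = x}) :=
    isFinitelyPresented_of_coherent (hvertex x) ((closure_le _).2 fun s hs => hs.2)
      ((fg_iff _).2 ⟨_, rfl, hES.finite.subset (Set.sep_subset _ _)⟩)
  obtain ⟨Q, _, π, σ, hQ, hσ⟩ := exists_isApproximation hES.finite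
  let _ : MulAction Q X := MulAction.compHom X π
  have hsys := hσ.isLocalStabilizerSystem (fun _ _ => rfl) hES hfp
  obtain ⟨x, hx⟩ := hF.connected.nonempty
  have hFQ : IsConnectedTransversal Q T F :=
    ⟨hF.connected, fun x hx y hy q => hF.eq_of_smul_eq x hx y hy (π q)⟩
  have hstab := hsys.eq_stabilizer hFQ hT.isAcyclic (fun q => hact (π q)) hx
  have hinj : Function.Injective π := (injective_iff_map_eq_one π).2 fun q hq => by
    have hqx : q ∈ closure (σ '' {s ∈ S | s • x = x}) := by
      rw [hstab]
      exact (congrArg (· • x) hq).trans (one_smul H x)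
    exact hσ.injOn _ (Set.sep_subset _ _) (hfp x hx) hqx (one_mem _) (hq.trans (map_one π).symm)
  have hsurj : Function.Surjective π := by
    rw [← MonoidHom.range_eq_top, ← top_le_iff, ← hES.closure_eq_top, closure_le]
    exact fun s hs => ⟨σ s, hσ.map_lift s hs⟩
  exact .equiv (MulEquiv.ofBijective π ⟨hinj, hsurj⟩)

lemma coherent_of_action_on_tree (hT : T.IsTree) (hact : ActsByAutomorphisms G T)
    (hvertex : ∀ x : X, Group.Coherent (MulAction.stabilizer G x))
    (hedge : ∀ x y : X, T.Adj x y →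
      Group.Slender ↥(MulAction.stabilizer G x ⊓ MulAction.stabilizer G y)) :
    Group.Coherent G := by
  intro H hH
  have hstab (x : X) : (MulAction.stabilizer H x).map H.subtype ≤ MulAction.stabilizer G x := by
    rintro _ ⟨h, hh, rfl⟩
    exact hh
  have : Group.FG H := (Group.fg_iff_subgroup_fg H).2 hH
  refine finitelyPresented_iff.2 (isFinitelyPresented_of_action_on_tree hT (fun h => hact h)
    (fun x => ?_) fun x y hxy => ?_)
  · have hcodom (h : MulAction.stabilizer H x) : (h : G) ∈ MulAction.stabilizer G x := h.2
    refine coherent_of_injective (f := (H.subtype.comp (Subgroup.subtype _)).codRestrict _ hcodom)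
      ?_ (hvertex x)
    exact (MonoidHom.injective_codRestrict _ _ _).2
      (H.subtype_injective.comp (Subgroup.subtype_injective _))
  · refine fg_of_map_injective H.subtype_injective (slender_subgroup_iff.1 (hedge x y hxy) _ ?_)
    exact (map_inf_le _ _ _).trans (inf_le_inf (hstab x) (hstab y))

end ActionsOnTrees

section Generators

variable {V K : Type*} [DecidableEq V] [Group K] (Γ : SimpleGraph V) [DecidableRel Γ.Adj]

/-- The standard generator of a right-angled Coxeter group attached to the vertex `v`. -/
def generator (v : V) : Γ.racg := Γ.coxeterMatrix.simple v

lemma generator_mul_self (v : V) : generator Γ v * generator Γ v = 1 :=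
  Γ.coxeterMatrix.toCoxeterSystem.simple_mul_simple_self v

lemma generator_inv (v : V) : (generator Γ v)⁻¹ = generator Γ v :=
  inv_eq_of_mul_eq_one_left (generator_mul_self Γ v)

lemma closure_range_generator : closure (Set.range (generator Γ)) = ⊤ :=
  Γ.coxeterMatrix.toCoxeterSystem.subgroup_closure_range_simple

variable {Γ}

lemma hom_ext {f g : Γ.racg →* K} (h : ∀ v, f (generator Γ v) = g (generator Γ v)) : f = g :=
  Γ.coxeterMatrix.toCoxeterSystem.ext_simple h

lemma exists_hom_generator_eq {f : V → K} (hf : ∀ v, f v * f v = 1)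
    (hcomm : ∀ v w, Γ.Adj v w → Commute (f v) (f w)) :
    ∃ φ : Γ.racg →* K, ∀ v, φ (generator Γ v) = f v := by
  have hlift : Γ.coxeterMatrix.IsLiftable f := by
    intro v w
    change (f v * f w) ^ (if v = w then 1 else if Γ.Adj v w then 2 else 0) = 1
    split_ifs with hvw hadj
    · rw [hvw, pow_one, hf]
    · rw [(hcomm v w hadj).mul_pow, pow_two, pow_two, hf, hf, one_mul]
    · exact pow_zero _
  exact ⟨Γ.coxeterMatrix.toCoxeterSystem.lift ⟨f, hlift⟩,
    Γ.coxeterMatrix.toCoxeterSystem.lift_apply_simple hlift⟩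

lemma commute_generator {v w : V} (h : Γ.Adj v w) :
    Commute (generator Γ v) (generator Γ w) := by
  have hM : Γ.coxeterMatrix v w = 2 := by
    change (if v = w then 1 else if Γ.Adj v w then 2 else 0) = 2
    rw [if_neg h.ne, if_pos h]
  have hpow : (generator Γ v * generator Γ w) ^ 2 = 1 :=
    hM ▸ Γ.coxeterMatrix.toCoxeterSystem.simple_mul_simple_pow v w
  calc generator Γ v * generator Γ w
      = (generator Γ v * generator Γ w)⁻¹ := eq_inv_of_mul_eq_one_left (by rw [← pow_two, hpow])
    _ = generator Γ w * generator Γ v := by rw [mul_inv_rev, generator_inv, generator_inv]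

variable (Γ)

lemma generator_injective : Function.Injective (generator Γ) := by
  intro v w h
  obtain ⟨φ, hφ⟩ := exists_hom_generator_eq (Γ := Γ)
    (f := fun u => if u = v then Multiplicative.ofAdd (1 : ZMod 2) else 1)
    (fun u => by split_ifs <;> decide) (fun _ _ _ => Commute.all _ _)
  by_contra hvw
  have := congrArg φ h
  rw [hφ, hφ, if_pos rfl, if_neg (Ne.symm hvw)] at this
  exact absurd this (by decide)

lemma generator_ne_one (v : V) : generator Γ v ≠ 1 := by
  obtain ⟨φ, hφ⟩ := exists_hom_generator_eq (Γ := Γ)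
    (f := fun _ => Multiplicative.ofAdd (1 : ZMod 2)) (fun _ => by decide)
    (fun _ _ _ => Commute.all _ _)
  intro h
  have := hφ v
  rw [h, map_one] at this
  exact absurd this (by decide)

end Generators

section FreeProduct

variable (I : Type*) [DecidableEq I]

/-- The Cayley graph of the free product of copies of the group of order two indexed by `I`, which
is encoded as the right-angled Coxeter group of the edgeless graph on `I`. -/
def cayleyTree : SimpleGraph (⊥ : SimpleGraph I).racg :=
  .mulCayley (Set.range (generator ⊥))

variable {I}

lemma cayleyTree_adj_iff {m n : (⊥ : SimpleGraph I).racg} :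
    (cayleyTree I).Adj n m ↔ ∃ i, m = n * generator ⊥ i := by
  have hswap (i : I) : n = m * generator ⊥ i ↔ m = n * generator ⊥ i := by
    rw [eq_comm, ← eq_mul_inv_iff_mul_eq, generator_inv]
  rw [cayleyTree, SimpleGraph.mulCayley_adj', Set.exists_range_iff]
  simp only [hswap, eq_comm (b := m), or_self, and_iff_right_iff_imp]
  rintro ⟨i, rfl⟩ h
  exact generator_ne_one _ i (by simpa using h)

/-- Reading off the generators along a walk without backtracking yields a reduced word, whose
first letter is recovered from the first edge of the walk. -/
lemma exists_word_of_isChain_edges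
    {ψ : (⊥ : SimpleGraph I).racg →* Monoid.CoprodI fun _ : I => Multiplicative (ZMod 2)}
    (hψ : ∀ i, ψ (generator ⊥ i) = Monoid.CoprodI.of (i := i) (Multiplicative.ofAdd 1))
    {n m : (⊥ : SimpleGraph I).racg} (p : (cayleyTree I).Walk n m) (hp : p.edges.IsChain (· ≠ ·)) :
    ∃ w : Monoid.CoprodI.Word fun _ : I => Multiplicative (ZMod 2),
      ψ m = ψ n * w.prod ∧ w.toList.length = p.length ∧
        p.edges.head? = w.fstIdx.map fun i => s(n, n * generator ⊥ i) := by
  induction p with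
  | nil => exact ⟨.empty, by simp, rfl, rfl⟩
  | @cons n n' m h p ih =>
    obtain ⟨w, hprod, hlength, hhead⟩ := ih hp.tail
    obtain ⟨i, rfl⟩ := cayleyTree_adj_iff.1 h
    have hw : w.fstIdx ≠ some i := by
      intro hi
      rw [hi, Option.map_some, mul_assoc, generator_mul_self, mul_one] at hhead
      obtain ⟨l, hl⟩ := List.head?_eq_some_iff.1 hhead
      rw [SimpleGraph.Walk.edges_cons, hl, List.isChain_cons_cons] at hp
      exact hp.1 Sym2.eq_swap
    refine ⟨.cons (Multiplicative.ofAdd 1) w hw (by decide), ?_, ?_, ?_⟩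
    · rw [Monoid.CoprodI.Word.prod_cons, ← hψ, hprod, map_mul, mul_assoc]
    · simp [Monoid.CoprodI.Word.cons, hlength]
    · simp [Monoid.CoprodI.Word.fstIdx_cons]

lemma cayleyTree_isAcyclic : (cayleyTree I).IsAcyclic := by
  intro n p hp
  obtain ⟨ψ, hψ⟩ := exists_hom_generator_eq (Γ := (⊥ : SimpleGraph I))
    (f := fun i => Monoid.CoprodI.of (M := fun _ : I => Multiplicative (ZMod 2)) (i := i)
      (Multiplicative.ofAdd 1))
    (fun i => by rw [← map_mul, ← map_one Monoid.CoprodI.of]; rfl) (fun _ _ h => h.elim)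
  obtain ⟨w, hprod, hlength, -⟩ :=
    exists_word_of_isChain_edges hψ p hp.isTrail.edges_nodup.isChain
  have hw : w = .empty := Monoid.CoprodI.Word.equiv.symm.injective (left_eq_mul.1 hprod)
  rw [hw] at hlength
  exact hp.not_nil (SimpleGraph.Walk.length_eq_zero_iff.1 hlength.symm)

lemma cayleyTree_isTree : (cayleyTree I).IsTree := by
  refine ⟨⟨fun n m => ?_⟩, cayleyTree_isAcyclic⟩
  suffices ∀ g n : (⊥ : SimpleGraph I).racg, (cayleyTree I).Reachable n (n * g) by
    simpa using this (n⁻¹ * m) n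
  intro g
  have hg : g ∈ closure (Set.range (generator (⊥ : SimpleGraph I))) :=
    closure_range_generator (⊥ : SimpleGraph I) ▸ mem_top g
  induction hg using closure_induction with
  | mem _ h =>
    obtain ⟨i, rfl⟩ := h
    exact fun n => (cayleyTree_adj_iff.2 ⟨i, rfl⟩).reachable
  | one => simp
  | mul x y _ _ hx hy => exact fun n => (hx n).trans (mul_assoc n x y ▸ hy (n * x))
  | inv x _ hx => exact fun n => by simpa using (hx (n * x⁻¹)).symm

end FreeProduct

section SemidirectProduct

/-- Let `N ⋊[φ] A` act on `N` by letting `N` act by left translations and `A` through `φ`. -/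
abbrev affineAction {N A : Type*} [Group N] [Group A] (φ : A →* MulAut N) :
    MulAction (N ⋊[φ] A) N where
  smul g n := g.left * φ g.right n
  one_smul n := by
    change (1 : N ⋊[φ] A).left * φ (1 : N ⋊[φ] A).right n = n
    simp
  mul_smul g h n := by
    change (g * h).left * φ (g * h).right n = g.left * φ g.right (h.left * φ h.right n)
    simp [mul_assoc]

variable {A I : Type*} [Group A] [MulAction A I] [DecidableEq I]

variable (A I) in
lemma exists_permutation_hom : ∃ φ : A →* MulAut (⊥ : SimpleGraph I).racg,
    ∀ a i, φ a (generator ⊥ i) = generator ⊥ (a • i) := by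
  choose f hf using fun a : A => exists_hom_generator_eq (Γ := (⊥ : SimpleGraph I))
    (f := fun i => generator ⊥ (a • i)) (fun _ => generator_mul_self _ _) (fun _ _ h => h.elim)
  have f_one : f 1 = .id _ := hom_ext fun i => by simp [hf]
  have f_mul (a b : A) : f (a * b) = (f a).comp (f b) := hom_ext fun i => by simp [hf, mul_smul]
  let _ : MulDistribMulAction A (⊥ : SimpleGraph I).racg :=
    { smul := fun a => f a
      one_smul := DFunLike.congr_fun f_one
      mul_smul := fun a b => DFunLike.congr_fun (f_mul a b)
      smul_one := fun a => map_one (f a)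
      smul_mul := fun a => map_mul (f a) }
  exact ⟨MulDistribMulAction.toMulAut A _, hf⟩

lemma coherent_semidirectProduct {φ : A →* MulAut (⊥ : SimpleGraph I).racg}
    (hφ : ∀ a i, φ a (generator ⊥ i) = generator ⊥ (a • i)) (hA : Group.Coherent A)
    (hstab : ∀ i : I, Group.Slender (MulAction.stabilizer A i)) :
    Group.Coherent ((⊥ : SimpleGraph I).racg ⋊[φ] A) := by
  let _ := affineAction φ
  have smul_def (g : (⊥ : SimpleGraph I).racg ⋊[φ] A) (n : (⊥ : SimpleGraph I).racg) :
    g • n = g.left * φ g.right n := rfl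
  have injOn_right (n : (⊥ : SimpleGraph I).racg) :
      Set.InjOn (SemidirectProduct.rightHom (φ := φ))
        (MulAction.stabilizer ((⊥ : SimpleGraph I).racg ⋊[φ] A) n) := by
    intro g hg h hh (hright : g.right = h.right)
    refine SemidirectProduct.ext (mul_right_cancel (b := φ g.right n) ?_) hright
    have hgh : g • n = h • n := hg.trans hh.symm
    rwa [smul_def, smul_def, ← hright] at hgh
  refine coherent_of_action_on_tree (cayleyTree_isTree (I := I)) (fun g n m h => ?_) (fun n => ?_)
    fun n m h => ?_
  · obtain ⟨i, rfl⟩ := cayleyTree_adj_iff.1 h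
    exact cayleyTree_adj_iff.2 ⟨g.right • i, by rw [smul_def, smul_def, map_mul, hφ, mul_assoc]⟩
  · exact coherent_of_injective (f := SemidirectProduct.rightHom.comp (Subgroup.subtype _))
      (injOn_right n).injective hA
  · obtain ⟨i, rfl⟩ := cayleyTree_adj_iff.1 h
    have right_mem (g : ↥(MulAction.stabilizer ((⊥ : SimpleGraph I).racg ⋊[φ] A) n ⊓
        MulAction.stabilizer ((⊥ : SimpleGraph I).racg ⋊[φ] A) (n * generator ⊥ i))) :
        SemidirectProduct.rightHom g.1 ∈ MulAction.stabilizer A i := by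
      have hn : g.1 • n = n := g.2.1
      have hni : g.1 • (n * generator ⊥ i) = n * generator ⊥ i := g.2.2
      rw [smul_def] at hn hni
      rw [map_mul, hφ, ← mul_assoc, hn] at hni
      exact generator_injective _ (mul_left_cancel hni)
    refine slender_of_injective
      (f := (SemidirectProduct.rightHom.comp (Subgroup.subtype _)).codRestrict _ right_mem)
      ((MonoidHom.injective_codRestrict _ _ _).2 ?_) (hstab i)
    exact fun g h hgh => Subtype.ext (injOn_right n g.2.1 h.2.1 hgh)

end SemidirectProduct

section AddingAGenerator

variable {A G : Type*} [Group A] [Group G] {C : Subgroup A}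

lemma slender_stabilizer_quotient (hC : Group.Slender C) (i : A ⧸ C) :
    Group.Slender (MulAction.stabilizer A i) := by
  obtain ⟨a, rfl⟩ := MulAction.exists_smul_eq A ((1 : A) : A ⧸ C) i
  have hC' : Group.Slender (MulAction.stabilizer A ((1 : A) : A ⧸ C)) := by
    rwa [MulAction.stabilizer_quotient]
  let e := MulAction.stabilizerEquivStabilizer (a := ((1 : A) : A ⧸ C)) (g := a) rfl
  exact slender_of_injective (f := e.symm.toMonoidHom) e.symm.injective hC'

lemma exists_hom_from_semidirectProduct [DecidableEq (A ⧸ C)] {j : A →* G} {t : G} (ht : t * t = 1)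
    (hC : ∀ c ∈ C, Commute (j c) t) {φ : A →* MulAut (⊥ : SimpleGraph (A ⧸ C)).racg}
    (hφ : ∀ a i, φ a (generator ⊥ i) = generator ⊥ (a • i)) :
    ∃ τ : (⊥ : SimpleGraph (A ⧸ C)).racg ⋊[φ] A →* G,
      τ (.inl (generator ⊥ ((1 : A) : A ⧸ C))) = t ∧ ∀ a, τ (.inr a) = j a := by
  have conj_eq (a b : A) (hab : a⁻¹ * b ∈ C) : j a * t * (j a)⁻¹ = j b * t * (j b)⁻¹ := by
    have h := hC _ hab
    rw [map_mul, map_inv, commute_iff_eq] at h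
    calc j a * t * (j a)⁻¹ = j a * (t * ((j a)⁻¹ * j b)) * (j b)⁻¹ := by group
      _ = j b * t * (j b)⁻¹ := by rw [← h]; group
  let conj : A ⧸ C → G := Quotient.lift (fun a => j a * t * (j a)⁻¹) fun a b hab =>
    conj_eq a b (QuotientGroup.leftRel_apply.1 hab)
  have conj_mk (a : A) : conj a = j a * t * (j a)⁻¹ := rfl
  obtain ⟨ψ, hψ⟩ := exists_hom_generator_eq (Γ := (⊥ : SimpleGraph (A ⧸ C))) (f := conj)
    (by
      intro i
      obtain ⟨a, rfl⟩ := QuotientGroup.mk_surjective i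
      rw [conj_mk, conj_mul, ht, mul_one, mul_inv_cancel])
    (fun _ _ h => h.elim)
  have hequiv (a : A) : ψ.comp (φ a).toMonoidHom = (MulAut.conj (j a)).toMonoidHom.comp ψ := by
    refine hom_ext fun i => ?_
    obtain ⟨b, rfl⟩ := QuotientGroup.mk_surjective i
    simp only [MonoidHom.comp_apply, MulEquiv.toMonoidHom_eq_coe, MonoidHom.coe_coe, hφ, hψ,
      MulAction.Quotient.smul_mk, smul_eq_mul, conj_mk, MulAut.conj_apply, map_mul, mul_inv_rev,
      mul_assoc, inv_mul_cancel_left]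
  refine ⟨SemidirectProduct.lift ψ j hequiv, ?_, fun a => SemidirectProduct.lift_inr ..⟩
  rw [SemidirectProduct.lift_inl, hψ, conj_mk, map_one, one_mul, inv_one, mul_one]

lemma commute_inl_inr [DecidableEq (A ⧸ C)] {φ : A →* MulAut (⊥ : SimpleGraph (A ⧸ C)).racg}
    (hφ : ∀ a i, φ a (generator ⊥ i) = generator ⊥ (a • i)) {c : A} (hc : c ∈ C) :
    Commute (SemidirectProduct.inl (φ := φ) (generator ⊥ ((1 : A) : A ⧸ C))) (.inr c) := by
  have hfix : c • ((1 : A) : A ⧸ C) = (1 : A) := by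
    rwa [← MulAction.mem_stabilizer_iff, MulAction.stabilizer_quotient]
  have hconj := SemidirectProduct.inl_aut (φ := φ) c (generator ⊥ ((1 : A) : A ⧸ C))
  rwa [hφ, hfix, map_inv, eq_mul_inv_iff_mul_eq] at hconj

variable {V : Type*} [DecidableEq V] {Γ : SimpleGraph V} [DecidableRel Γ.Adj]

lemma exists_hom_to_semidirectProduct [DecidableEq (A ⧸ C)] {v : V} {r : Γ.racg →* A}
    (hr : ∀ u, Γ.Adj v u → r (generator Γ u) ∈ C)
    {φ : A →* MulAut (⊥ : SimpleGraph (A ⧸ C)).racg}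
    (hφ : ∀ a i, φ a (generator ⊥ i) = generator ⊥ (a • i)) :
    ∃ ρ : Γ.racg →* (⊥ : SimpleGraph (A ⧸ C)).racg ⋊[φ] A,
      ρ (generator Γ v) = .inl (generator ⊥ ((1 : A) : A ⧸ C)) ∧
        ∀ u ≠ v, ρ (generator Γ u) = .inr (r (generator Γ u)) := by
  obtain ⟨ρ, hρ⟩ := exists_hom_generator_eq (Γ := Γ)
    (f := fun u => if u = v then SemidirectProduct.inl (φ := φ) (generator ⊥ ((1 : A) : A ⧸ C))
      else .inr (r (generator Γ u)))
    (fun u => by split_ifs <;> simp only [← map_mul, generator_mul_self, map_one])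
    (fun u w huw => by
      split_ifs with hu hw hw
      · exact Commute.refl _
      · exact commute_inl_inr hφ (hr w (hu ▸ huw))
      · exact (commute_inl_inr hφ (hr u (hw ▸ huw.symm))).symm
      · exact ((commute_generator huw).map r).map _)
  exact ⟨ρ, (hρ v).trans (if_pos rfl), fun u hu => (hρ u).trans (if_neg hu)⟩

variable (Γ) in
lemma exists_retraction_closure (W : Set V) : ∃ r : Γ.racg →* closure (generator Γ '' W),
    (∀ u ∈ W, (r (generator Γ u) : Γ.racg) = generator Γ u) ∧
      ∀ u ∉ W, r (generator Γ u) = 1 := by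
  classical
  obtain ⟨r, hr⟩ := exists_hom_generator_eq (Γ := Γ)
    (f := fun u => if u ∈ W then generator Γ u else 1)
    (fun u => by
      split_ifs
      · exact generator_mul_self Γ u
      · exact mul_one 1)
    (fun u w huw => by
      split_ifs
      exacts [commute_generator huw, Commute.one_right _, Commute.one_left _, Commute.one_left _])
  have hrange : r.range ≤ closure (generator Γ '' W) := by
    rw [MonoidHom.range_eq_map, ← closure_range_generator, MonoidHom.map_closure, closure_le]
    rintro _ ⟨_, ⟨u, rfl⟩, rfl⟩
    rw [hr]
    split_ifs with hu
    exacts [subset_closure ⟨u, hu, rfl⟩, one_mem _]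
  exact ⟨r.codRestrict _ fun x => hrange ⟨x, rfl⟩, fun u hu => (hr u).trans (if_pos hu),
    fun u hu => Subtype.ext ((hr u).trans (if_neg hu))⟩

/-- The subgroup generated by `W` and `v` embeds in the semidirect product of the subgroup
generated by `W` with the free product of the groups of order two generated by the conjugates of
`v`, which are indexed by the cosets of the subgroup generated by the link of `v`. -/
lemma coherent_closure_insert {W : Set V} {v : V}
    (hW : Group.Coherent (closure (generator Γ '' W)))
    (hlink : Group.Slender (closure (generator Γ '' (W ∩ Γ.neighborSet v)))) :
    Group.Coherent (closure (generator Γ '' insert v W)) := by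
  classical
  set A := closure (generator Γ '' W)
  set L := closure (generator Γ '' (W ∩ Γ.neighborSet v))
  have hLA : L ≤ A := closure_mono (Set.image_mono Set.inter_subset_left)
  have hC : Group.Slender (L.subgroupOf A) :=
    slender_of_injective (f := (subgroupOfEquivOfLe hLA).toMonoidHom) (MulEquiv.injective _) hlink
  have hL (c : A) (hc : c ∈ L.subgroupOf A) : Commute (A.subtype c) (generator Γ v) := by
    have hle : L ≤ centralizer {generator Γ v} := by
      rw [closure_le, Set.image_subset_iff]
      exact fun u hu => mem_centralizer_singleton_iff.2 (commute_generator hu.2).symm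
    exact mem_centralizer_singleton_iff.1 (hle hc)
  obtain ⟨r, hrW, hr_one⟩ := exists_retraction_closure Γ W
  have hrL (u : V) (huv : Γ.Adj v u) : r (generator Γ u) ∈ L.subgroupOf A := by
    by_cases hu : u ∈ W
    · rw [mem_subgroupOf, hrW u hu]
      exact subset_closure ⟨u, ⟨hu, huv⟩, rfl⟩
    · exact hr_one u hu ▸ one_mem _
  obtain ⟨φ, hφ⟩ := exists_permutation_hom A (A ⧸ L.subgroupOf A)
  obtain ⟨τ, hτv, hτ⟩ := exists_hom_from_semidirectProduct (generator_mul_self Γ v) hL hφ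
  obtain ⟨ρ, hρv, hρ⟩ := exists_hom_to_semidirectProduct hrL hφ
  have hτρ : Set.EqOn (τ.comp ρ) (MonoidHom.id Γ.racg) (closure (generator Γ '' insert v W)) := by
    refine MonoidHom.eqOn_closure ?_
    rintro _ ⟨u, hu, rfl⟩
    by_cases huv : u = v
    · rw [huv, MonoidHom.comp_apply, hρv, hτv, MonoidHom.id_apply]
    · rw [MonoidHom.comp_apply, hρ u huv, hτ, coe_subtype, hrW u (hu.resolve_left huv),
        MonoidHom.id_apply]
  refine coherent_of_injective (f := ρ.comp (Subgroup.subtype _)) (fun x y hxy => Subtype.ext ?_)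
    (coherent_semidirectProduct hφ hW (slender_stabilizer_quotient hC))
  exact (hτρ x.2).symm.trans ((congrArg τ hxy).trans (hτρ y.2))

end AddingAGenerator

section Elimination

variable {V : Type*} {Γ : SimpleGraph V} {Λ : Set V}

/-- The complement of `Γ` restricts to a matching on `Λ`: every vertex of `Λ` fails to be adjacent
to at most one other vertex of `Λ`. The vertices of `Λ` then generate a direct product of finitely
many groups, each of order two or infinite dihedral, when `Λ` is finite. -/
def HasMatchingComplement (Γ : SimpleGraph V) (Λ : Set V) : Prop :=
  ∀ u ∈ Λ, (Λ ∩ Γᶜ.neighborSet u).Subsingleton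

lemma HasMatchingComplement.mono {Λ' : Set V} (hΛ : HasMatchingComplement Γ Λ) (h : Λ' ⊆ Λ) :
    HasMatchingComplement Γ Λ' :=
  fun u hu => (hΛ u (h hu)).anti (Set.inter_subset_inter_left _ h)

lemma exists_mem_of_not_hasMatchingComplement (h : ¬HasMatchingComplement Γ Λ) :
    ∃ u ∈ Λ, ∃ w ∈ Λ, ∃ w' ∈ Λ, Γᶜ.Adj u w ∧ Γᶜ.Adj u w' ∧ w ≠ w' := by
  simp only [HasMatchingComplement, not_forall, Set.not_subsingleton_iff] at h
  obtain ⟨u, hu, w, ⟨hw, huw⟩, w', ⟨hw', huw'⟩, hne⟩ := h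
  exact ⟨u, hu, w, hw, w', hw', huw, huw', hne⟩

/-- Otherwise some `u` has two distinct non-neighbours `w` and `w'`, and the link of `u` contains
three further vertices. -/
lemma exists_hasMatchingComplement_of_card_le_five {W : Finset V} (hW : W.Nonempty)
    (hcard : W.card ≤ 5) : ∃ v ∈ W, HasMatchingComplement Γ (W ∩ Γ.neighborSet v) := by
  classical
  by_contra! h
  obtain ⟨v, hv⟩ := hW
  obtain ⟨u, ⟨hu, -⟩, w, ⟨hw, -⟩, w', ⟨hw', -⟩, huw, huw', hww'⟩ :=
    exists_mem_of_not_hasMatchingComplement (h v hv)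
  obtain ⟨a, ⟨ha, hua⟩, b, ⟨hb, hub⟩, b', ⟨hb', hub'⟩, hab, hab', hbb'⟩ :=
    exists_mem_of_not_hasMatchingComplement (h u hu)
  have hfar : ({u, w, w'} : Finset V).card = 3 :=
    Finset.card_eq_three.2 ⟨u, w, w', huw.ne, huw'.ne, hww', rfl⟩
  have hnear : ({a, b, b'} : Finset V).card = 3 :=
    Finset.card_eq_three.2 ⟨a, b, b', hab.ne, hab'.ne, hbb', rfl⟩
  have not_adj (x : V) (hx : x ∈ ({u, w, w'} : Finset V)) : ¬Γ.Adj u x := by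
    simp only [Finset.mem_insert, Finset.mem_singleton] at hx
    obtain rfl | rfl | rfl := hx
    exacts [Γ.irrefl, huw.2, huw'.2]
  have adj (x : V) (hx : x ∈ ({a, b, b'} : Finset V)) : Γ.Adj u x := by
    simp only [Finset.mem_insert, Finset.mem_singleton] at hx
    obtain rfl | rfl | rfl := hx
    exacts [hua, hub, hub']
  have hdisj : Disjoint ({u, w, w'} : Finset V) {a, b, b'} :=
    Finset.disjoint_left.2 fun x hx hx' => not_adj x hx (adj x hx')
  have hsub : ({u, w, w'} ∪ {a, b, b'} : Finset V) ⊆ W := by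
    simp only [Finset.union_subset_iff, Finset.insert_subset_iff, Finset.singleton_subset_iff]
    exact ⟨⟨hu, hw, hw'⟩, ha, hb, hb'⟩
  have := Finset.card_le_card hsub
  rw [Finset.card_union_of_disjoint hdisj] at this
  lia

variable [DecidableEq V] [DecidableRel Γ.Adj]

lemma slender_closure_of_hasMatchingComplement (hfin : Λ.Finite)
    (hΛ : HasMatchingComplement Γ Λ) : Group.Slender (closure (generator Γ '' Λ)) := by
  refine slender_closure_of_involutions (hfin.image _) ?_ ?_
  · rintro _ ⟨u, -, rfl⟩
    exact generator_mul_self Γ u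
  · rintro _ ⟨u, hu, rfl⟩
    refine ((hΛ u hu).image (generator Γ)).anti ?_
    rintro _ ⟨⟨w, hw, rfl⟩, hcomm⟩
    refine ⟨w, ⟨hw, ?_⟩, rfl⟩
    refine (SimpleGraph.compl_adj ..).2 ⟨?_, fun h => hcomm (commute_generator h)⟩
    rintro rfl
    exact hcomm (Commute.refl _)

lemma coherent_closure_of_elimination
    (h : ∀ W : Finset V, W.Nonempty → ∃ v ∈ W, HasMatchingComplement Γ (W ∩ Γ.neighborSet v))
    (W : Finset V) : Group.Coherent (closure (generator Γ '' W)) := by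
  induction W using Finset.strongInduction with
  | H W ih =>
    obtain rfl | hW := W.eq_empty_or_nonempty
    · rw [Finset.coe_empty, Set.image_empty, Subgroup.closure_empty]
      exact fun _ _ => finitelyPresented_iff.2 inferInstance
    · obtain ⟨v, hv, hlink⟩ := h W hW
      rw [← Finset.insert_erase hv, Finset.coe_insert]
      refine coherent_closure_insert (ih _ (Finset.erase_ssubset hv))
        (slender_closure_of_hasMatchingComplement ?_ (hlink.mono ?_))
      · exact (W.erase v).finite_toSet.inter_of_left _
      · exact Set.inter_subset_inter_left _ (Finset.coe_subset.2 (W.erase_subset v))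

end Elimination

end RACG

theorem racg_coherent_of_card_le_five_general {V : Type*} [DecidableEq V] (Γ : SimpleGraph V)
    [DecidableRel Γ.Adj]
    (h : ∀ W : Finset V, W.Nonempty →
      ∃ v ∈ W, RACG.HasMatchingComplement Γ (W ∩ Γ.neighborSet v)) :
    Group.Coherent Γ.racg := by
  intro H hH
  obtain ⟨S, hS, hSfin, hHS⟩ := RACG.exists_finite_subset_le_closure hH
    (le_top.trans (RACG.closure_range_generator Γ).ge)
  let W := (hSfin.preimage (RACG.generator_injective Γ).injOn).toFinset
  have hWS : RACG.generator Γ '' W = S := by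
    rw [Set.Finite.coe_toFinset, Set.image_preimage_eq_of_subset hS]
  exact RACG.finitelyPresented_iff.2 (RACG.isFinitelyPresented_of_coherent
    (RACG.coherent_closure_of_elimination h W) (hWS ▸ hHS) hH)

/-- The right-angled Coxeter group of a finite simplicial graph with at most
`5` vertices is coherent. -/
theorem racg_coherent_of_card_le_five
    {V : Type} [Fintype V] [DecidableEq V] (Γ : SimpleGraph V) [DecidableRel Γ.Adj]
    (hcard : Fintype.card V ≤ 5) :
    Group.Coherent Γ.racg :=
  racg_coherent_of_card_le_five_general Γ fun W hW =>
    RACG.exists_hasMatchingComplement_of_card_le_five hW (W.card_le_univ.trans hcard)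
end
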